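/- arXiv:1505.05027 — 11 statements merged into one kernel-verified Lean document; each statement's English description precedes it below -/
import Mathlib

section
/- Let d > 0, ξ > 0, let Φ : ℝ → ℝ be a smooth π-periodic function and M_Φ(θ) = e^{−ξΦ(θ)/d}/Z with Z = (1/π)∫_{-π/2}^{π/2} e^{−ξΦ(θ)/d} dθ. If f : ℝ → ℝ is a smooth, strictly positive, π-periodic function such that d · ∂_θ( M_Φ(θ) ∂_θ( f(θ)/M_Φ(θ) ) ) = 0 for all θ, then there exists a constant ρ > 0 such that f(θ) = ρ · M_Φ(θ) for all θ. -/
/-!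
Write `g = f / M`. The equation says that the flux `M * g'` is a constant. Since `g` is periodic,
Rolle's theorem gives a zero of `g'`, so this constant is `0`; as `M > 0`, `g' = 0` everywhere and
`g` is a constant `ρ`. Rolle's theorem replaces the integration against `f / M` over a period.
-/

open scoped Real
open MeasureTheory

theorem equilibria_are_von_Mises
    (d ξ : ℝ) (hd : 0 < d) (hξ : 0 < ξ)
    (Φ : ℝ → ℝ) (hΦ : ContDiff ℝ (⊤ : ℕ∞) Φ) (hΦper : Function.Periodic Φ π)
    (Z : ℝ) (hZ : Z = (1/π) * ∫ θ in (-(π/2))..(π/2), Real.exp (-ξ * Φ θ / d))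
    (M : ℝ → ℝ) (hM : ∀ θ, M θ = Real.exp (-ξ * Φ θ / d) / Z)
    (f : ℝ → ℝ) (hf : ContDiff ℝ (⊤ : ℕ∞) f) (hpos : ∀ θ, 0 < f θ)
    (hfper : Function.Periodic f π)
    (heq : ∀ θ, d * deriv (fun s => M s * deriv (fun t => f t / M t) s) θ = 0) :
    ∃ ρ : ℝ, 0 < ρ ∧ ∀ θ, f θ = ρ * M θ := by
  have hE : ContDiff ℝ (⊤ : ℕ∞) (fun θ => Real.exp (-ξ * Φ θ / d)) :=
    ((contDiff_const.mul hΦ).div_const d).exp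
  have hZpos : 0 < Z := by
    rw [hZ]
    refine mul_pos (by positivity) ?_
    exact intervalIntegral.intervalIntegral_pos_of_pos
      (hE.continuous.intervalIntegrable _ _) (fun _ => Real.exp_pos _)
      (by linarith [Real.pi_pos])
  have hMpos : ∀ θ, 0 < M θ := fun θ => by
    rw [hM]
    exact div_pos (Real.exp_pos _) hZpos
  have hMsmooth : ContDiff ℝ (⊤ : ℕ∞) M := by
    rw [funext hM]
    exact hE.div_const Z
  have hMper : Function.Periodic M π := fun θ => by rw [hM, hM, hΦper θ]
  have hg : ContDiff ℝ (⊤ : ℕ∞) (fun t => f t / M t) :=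
    hf.div hMsmooth fun θ => (hMpos θ).ne'
  have hg' : ContDiff ℝ (⊤ : ℕ∞) (deriv fun t => f t / M t) :=
    (contDiff_infty_iff_deriv.mp hg).2
  have hflux : Differentiable ℝ (fun s => M s * deriv (fun t => f t / M t) s) :=
    (hMsmooth.mul hg').differentiable (by simp)
  have hconst := is_const_of_deriv_eq_zero hflux
    fun θ => (mul_eq_zero.mp (heq θ)).resolve_left hd.ne'
  obtain ⟨c, -, hc⟩ := exists_deriv_eq_zero (f := fun t => f t / M t) Real.pi_pos
    hg.continuous.continuousOn (by
      have h1 := hfper 0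
      have h2 := hMper 0
      rw [zero_add] at h1 h2
      simp only [h1, h2])
  have hg'zero : ∀ θ, deriv (fun t => f t / M t) θ = 0 := fun θ => by
    have h := hconst θ c
    simp only [hc, mul_zero] at h
    exact (mul_eq_zero.mp h).resolve_left (hMpos θ).ne'
  refine ⟨f 0 / M 0, div_pos (hpos 0) (hMpos 0), fun θ => ?_⟩
  have h := is_const_of_deriv_eq_zero (hg.differentiable (by simp)) hg'zero θ 0
  exact (div_eq_iff (hMpos θ).ne').mp h
end

section
/- Let r > 0, θ₀ ∈ ℝ, ρ > 0, d > 0, ξ > 0 and C₁ > 0 with r = ξ C₁ η / (2d), where η = ρ c(r), c(r) = ((1/π)∫_{-π/2}^{π/2} cos 2θ · e^{r cos 2θ} dθ) / ((1/π)∫_{-π/2}^{π/2} e^{r cos 2θ} dθ). Define f(θ) = ρ · e^{r cos 2(θ − θ₀)} / Z(r) with Z(r) = (1/π)∫_{-π/2}^{π/2} e^{r cos 2θ} dθ, and Φ[f](θ) = C₁ (1/π)∫_{-π/2}^{π/2} sin²(θ − θ') f(θ') dθ'. Then: (i) (1/π)∫_{-π/2}^{π/2} cos 2(θ' − θ₀)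 f(θ') dθ' = ρ c(r) and (1/π)∫_{-π/2}^{π/2} sin 2(θ' − θ₀) f(θ') dθ' = 0; and (ii) Q(f)(θ) = d ∂²_θ f(θ) + ξ ∂_θ( ∂_θ Φ[f](θ) · f(θ) ) = 0 for all θ. -/
open scoped Real
open MeasureTheory

/-!
The flux vanishes pointwise: `d f' + ξ Φ' f = 0`, and `Q(f)` is the derivative of this flux.

Write `ψ = θ - θ₀`. Functions of `2ψ` are `π`-periodic, so integrals over `[-π/2, π/2]` do not
depend on `θ₀` (`integral_shift`); at `θ₀ = 0` the cosine moment is `ρ c` by definition and the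
sine moment vanishes by oddness. Expanding `sin² (θ - θ')` in the double angles `2(θ - θ₀)` and
`2(θ' - θ₀)` (`sin_sq_sub_eq`), these moments give `Φ θ = const - (C₁ ρ c / 2) cos 2ψ`, hence
`Φ' = C₁ ρ c sin 2ψ`. Since `f' = -2 r sin 2ψ f`, the relation `2 d r = ξ C₁ ρ c` cancels the flux.
-/

lemma integral_shift (G : ℝ → ℝ) (hG : Function.Periodic G π) (a : ℝ) :
    ∫ θ in (-(π/2))..(π/2), G (θ - a) = ∫ θ in (-(π/2))..(π/2), G θ := by
  rw [intervalIntegral.integral_comp_sub_right]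
  have h := hG.intervalIntegral_add_eq (-(π/2) - a) (-(π/2))
  rwa [show -(π/2) - a + π = π/2 - a by ring, show -(π/2) + π = π/2 by ring] at h

lemma integral_symm_eq_zero_of_odd (G : ℝ → ℝ) (hG : ∀ x, G (-x) = -G x) (a : ℝ) :
    ∫ θ in (-a)..a, G θ = 0 := by
  have h := intervalIntegral.integral_comp_neg (a := -a) (b := a) G
  simp only [hG, intervalIntegral.integral_neg, neg_neg] at h
  linarith

lemma sin_sq_sub_eq (s t a : ℝ) :
    Real.sin (s - t) ^ 2 = 1/2 - (1/2) * (Real.cos (2*(s - a)) * Real.cos (2*(t - a))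
      + Real.sin (2*(s - a)) * Real.sin (2*(t - a))) := by
  rw [← Real.cos_sub, show 2*(s - a) - 2*(t - a) = 2*(s - t) by ring, Real.cos_two_mul,
    Real.cos_sq']
  ring

theorem von_Mises_Fisher_is_equilibrium
    (r θ₀ ρ d ξ C₁ : ℝ) (hr : 0 < r) (hρ : 0 < ρ) (hd : 0 < d)
    (hξ : 0 < ξ) (hC₁ : 0 < C₁)
    (Z c η : ℝ)
    (hZ : Z = (1/π) * ∫ θ in (-(π/2))..(π/2), Real.exp (r * Real.cos (2*θ)))
    (hc : c = ((1/π) * ∫ θ in (-(π/2))..(π/2),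
        Real.cos (2*θ) * Real.exp (r * Real.cos (2*θ))) / Z)
    (hη : η = ρ * c)
    (hrel : r = ξ * C₁ * η / (2*d))
    (f : ℝ → ℝ)
    (hf : ∀ θ, f θ = ρ * Real.exp (r * Real.cos (2*(θ - θ₀))) / Z)
    (Φ : ℝ → ℝ)
    (hΦ : ∀ θ, Φ θ = C₁ * ((1/π) * ∫ θ' in (-(π/2))..(π/2),
        (Real.sin (θ - θ'))^2 * f θ')) :
    (((1/π) * ∫ θ' in (-(π/2))..(π/2), Real.cos (2*(θ' - θ₀)) * f θ' = ρ * c)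
      ∧ ((1/π) * ∫ θ' in (-(π/2))..(π/2), Real.sin (2*(θ' - θ₀)) * f θ' = 0))
    ∧ ∀ θ : ℝ,
        d * deriv (deriv f) θ + ξ * deriv (fun s => deriv Φ s * f s) θ = 0 := by
  have hf' : f = fun θ => ρ * Real.exp (r * Real.cos (2*(θ - θ₀))) / Z := funext hf
  have hcont : Continuous f := by rw [hf']; fun_prop
  have hcos : (1/π) * ∫ θ' in (-(π/2))..(π/2), Real.cos (2*(θ' - θ₀)) * f θ' = ρ * c := by
    have h := integral_shift (fun x => Real.cos (2*x) * Real.exp (r * Real.cos (2*x)))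
      (fun x => by simp only [mul_add, Real.cos_add_two_pi]) θ₀
    have e : ∀ x, Real.cos (2*(x - θ₀)) * f x = (ρ / Z) *
        (Real.cos (2*(x - θ₀)) * Real.exp (r * Real.cos (2*(x - θ₀)))) := by
      intro x; rw [hf]; ring
    simp only [e, intervalIntegral.integral_const_mul]
    rw [h, hc]
    ring
  have hsin : (1/π) * ∫ θ' in (-(π/2))..(π/2), Real.sin (2*(θ' - θ₀)) * f θ' = 0 := by
    have h := integral_shift (fun x => Real.sin (2*x) * Real.exp (r * Real.cos (2*x)))
      (fun x => by simp only [mul_add, Real.cos_add_two_pi, Real.sin_add_two_pi]) θ₀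
    have e : ∀ x, Real.sin (2*(x - θ₀)) * f x = (ρ / Z) *
        (Real.sin (2*(x - θ₀)) * Real.exp (r * Real.cos (2*(x - θ₀)))) := by
      intro x; rw [hf]; ring
    simp only [e, intervalIntegral.integral_const_mul]
    rw [h, integral_symm_eq_zero_of_odd _ (fun x => by simp)]
    simp
  refine ⟨⟨hcos, hsin⟩, fun θ => ?_⟩
  have hΦ' : ∀ s, Φ s = C₁ * ((1/π) * (1/2 * ∫ θ' in (-(π/2))..(π/2), f θ'))
      - C₁ * (ρ * c) / 2 * Real.cos (2*(s - θ₀)) := by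
    intro s
    have e : ∀ t, Real.sin (s - t) ^ 2 * f t = 1/2 * f t
        - (1/2 * Real.cos (2*(s - θ₀)) * (Real.cos (2*(t - θ₀)) * f t)
          + 1/2 * Real.sin (2*(s - θ₀)) * (Real.sin (2*(t - θ₀)) * f t)) := by
      intro t; rw [sin_sq_sub_eq s t θ₀]; ring
    rw [hΦ]
    simp only [e]
    rw [intervalIntegral.integral_sub, intervalIntegral.integral_add]
    · simp only [intervalIntegral.integral_const_mul]
      linear_combination (-C₁ / 2 * Real.cos (2*(s - θ₀))) * hcos
        + (-C₁ / 2 * Real.sin (2*(s - θ₀))) * hsin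
    all_goals exact Continuous.intervalIntegrable (by fun_prop) _ _
  have hlin : ∀ s, HasDerivAt (fun x : ℝ => 2*(x - θ₀)) 2 s := fun s => by
    simpa using ((hasDerivAt_id s).sub_const θ₀).const_mul 2
  have dΦ : ∀ s, deriv Φ s = C₁ * (ρ * c) * Real.sin (2*(s - θ₀)) := by
    intro s
    rw [funext hΦ', (((hlin s).cos.const_mul (C₁ * (ρ * c) / 2)).const_sub _).deriv]
    ring
  have df : ∀ s, deriv f s = -2 * r * Real.sin (2*(s - θ₀)) * f s := by
    intro s
    have h := ((((hlin s).cos.const_mul r).exp.const_mul ρ).div_const Z).deriv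
    rw [hf', h]
    ring
  have hrel' : 2 * d * r = ξ * C₁ * (ρ * c) := by
    rw [hη] at hrel
    field_simp at hrel
    linear_combination hrel
  have hflux : (fun s => deriv Φ s * f s) = fun s => (-(d / ξ)) * deriv f s := by
    funext s
    rw [dΦ, df]
    field_simp
    linear_combination (-Real.sin (2*(s - θ₀)) * f s) * hrel'
  rw [hflux, deriv_const_mul_field]
  field_simp
  ring
end

section
/- Fix θ₀ ∈ [-π/2, π/2), r > 0, d > 0 and set M_{θ₀}(θ) = e^{r cos 2(θ−θ₀)}/Z(r) with Z(r) = (1/π)∫_{-π/2}^{π/2} e^{r cos 2θ} dθ; define the linear operator L_{θ₀} f = d ∂_θ( M_{θ₀} ∂_θ( f/M_{θ₀} ) ). Then for a smooth π-periodic function Ψ, the following are equivalent: (a) (1/π)∫_{-π/2}^{π/2} (L_{θ₀} f)(θ) Ψ(θ) dθ = 0 for every smooth π-periodic function f satisfying (1/π)∫_{-π/2}^{π/2} f(θ) sin 2(θ − θ₀) dθ = 0; (b) there exists β ∈ ℝ such that L*_{θ₀} Ψ := −(d/M_{θ₀}) ∂_θ( M_{θ₀} ∂_θ Ψ ) equals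 β sin 2(θ − θ₀) for all θ. -/
open scoped Real
open MeasureTheory

/-!
On smooth `π`-periodic functions, two integrations by parts (no boundary terms, by periodicity) give
`∫ (L f) Ψ = -∫ f G` over one period, where `G = -(d / M) (M Ψ')'`; this is `integral_collision_mul`.
Hence (a) says that `G` is `L²`-orthogonal to every smooth periodic `f` orthogonal to
`S θ = sin 2(θ - θ₀)`, and (b) says that `G` is a multiple of `S`. That (b) implies (a) is
immediate. Conversely, `f = G - β S` with `β = ∫ G S / ∫ S²` is an admissible test function, and
then `∫ f² = ∫ f G - β ∫ f S = 0`, so `f = 0` on one period and therefore everywhere.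
-/

lemma periodic_deriv {u : ℝ → ℝ} {c : ℝ} (h : Function.Periodic u c) :
    Function.Periodic (deriv u) c := by
  intro x
  rw [← deriv_comp_add_const, show (fun y => u (y + c)) = u from funext h]

lemma contDiff_deriv {u : ℝ → ℝ} (h : ContDiff ℝ (⊤ : ℕ∞) u) :
    ContDiff ℝ (⊤ : ℕ∞) (deriv u) :=
  (contDiff_infty_iff_deriv.1 h).2

/-- Integration by parts over one period: the boundary terms cancel. -/
lemma integral_deriv_mul_periodic {u v : ℝ → ℝ}
    (hu : ContDiff ℝ (⊤ : ℕ∞) u) (hv : ContDiff ℝ (⊤ : ℕ∞) v)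
    (hup : Function.Periodic u π) (hvp : Function.Periodic v π) :
    ∫ θ in (-(π/2))..(π/2), deriv u θ * v θ
      = -∫ θ in (-(π/2))..(π/2), u θ * deriv v θ := by
  have hu' := (contDiff_infty_iff_deriv.1 hu).1
  have hv' := (contDiff_infty_iff_deriv.1 hv).1
  have key := intervalIntegral.integral_mul_deriv_eq_deriv_mul (a := -(π/2)) (b := π/2)
    (fun x _ => (hu' x).hasDerivAt) (fun x _ => (hv' x).hasDerivAt)
    ((contDiff_deriv hu).continuous.intervalIntegrable _ _)
    ((contDiff_deriv hv).continuous.intervalIntegrable _ _)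
  have h1 : u (π/2) = u (-(π/2)) := by
    rw [← hup (-(π/2))]; congr 1; ring
  have h2 : v (π/2) = v (-(π/2)) := by
    rw [← hvp (-(π/2))]; congr 1; ring
  rw [h1, h2] at key
  linarith

lemma eq_zero_of_integral_mul_self_eq_zero {h : ℝ → ℝ} (hc : Continuous h)
    (hp : Function.Periodic h π)
    (h0 : ∫ θ in (-(π/2))..(π/2), h θ * h θ = 0) (θ : ℝ) : h θ = 0 := by
  have hlt : -(π/2) < π/2 := by linarith [Real.pi_pos]
  obtain ⟨y, hy, hye⟩ := hp.exists_mem_Ico Real.pi_pos θ (-(π/2))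
  rw [hye]
  by_contra hne
  have hpos : 0 < ∫ θ in (-(π/2))..(π/2), h θ * h θ := by
    refine intervalIntegral.integral_pos hlt (hc.mul hc).continuousOn
      (fun x _ => mul_self_nonneg _) ⟨y, ⟨hy.1, ?_⟩, mul_self_pos.2 hne⟩
    linarith [hy.2]
  exact hpos.ne' h0

lemma integral_sub_const_mul {u v : ℝ → ℝ} (hu : Continuous u) (hv : Continuous v) (c a b : ℝ) :
    ∫ θ in a..b, (u θ - c * v θ) = (∫ θ in a..b, u θ) - c * ∫ θ in a..b, v θ := by
  rw [← intervalIntegral.integral_const_mul]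
  exact intervalIntegral.integral_sub (hu.intervalIntegrable _ _)
    ((continuous_const.mul hv).intervalIntegrable _ _)

/-- The collision operator is, up to sign, the formal adjoint of `Ψ ↦ -(d / M) (M Ψ')'` on smooth
`π`-periodic functions. -/
lemma integral_collision_mul {M f Ψ : ℝ → ℝ} (d : ℝ)
    (hM : ContDiff ℝ (⊤ : ℕ∞) M) (hMp : Function.Periodic M π) (hM0 : ∀ θ, M θ ≠ 0)
    (hf : ContDiff ℝ (⊤ : ℕ∞) f) (hfp : Function.Periodic f π)
    (hΨ : ContDiff ℝ (⊤ : ℕ∞) Ψ) (hΨp : Function.Periodic Ψ π) :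
    ∫ θ in (-(π/2))..(π/2), (d * deriv (fun s => M s * deriv (fun t => f t / M t) s) θ) * Ψ θ
      = -∫ θ in (-(π/2))..(π/2), f θ * (-(d / M θ) * deriv (fun s => M s * deriv Ψ s) θ) := by
  have hg : ContDiff ℝ (⊤ : ℕ∞) (fun t => f t / M t) := hf.div hM hM0
  have hgp : Function.Periodic (fun t => f t / M t) π := fun x => by simp only [hfp x, hMp x]
  have hMg : ContDiff ℝ (⊤ : ℕ∞) (fun s => M s * deriv (fun t => f t / M t) s) :=
    hM.mul (contDiff_deriv hg)
  have hMgp : Function.Periodic (fun s => M s * deriv (fun t => f t / M t) s) π := fun x => by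
    simp only [hMp x, periodic_deriv hgp x]
  have hMΨ : ContDiff ℝ (⊤ : ℕ∞) (fun s => M s * deriv Ψ s) := hM.mul (contDiff_deriv hΨ)
  have hMΨp : Function.Periodic (fun s => M s * deriv Ψ s) π := fun x => by
    simp only [hMp x, periodic_deriv hΨp x]
  have e1 := integral_deriv_mul_periodic hMg hΨ hMgp hΨp
  have e2 := integral_deriv_mul_periodic hg hMΨ hgp hMΨp
  have e3 : ∫ θ in (-(π/2))..(π/2), M θ * deriv (fun t => f t / M t) θ * deriv Ψ θ
      = ∫ θ in (-(π/2))..(π/2), deriv (fun t => f t / M t) θ * (M θ * deriv Ψ θ) := by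
    congr 1; ext θ; ring
  have e4 : ∫ θ in (-(π/2))..(π/2), f θ * (-(d / M θ) * deriv (fun s => M s * deriv Ψ s) θ)
      = (-d) * ∫ θ in (-(π/2))..(π/2), f θ / M θ * deriv (fun s => M s * deriv Ψ s) θ := by
    rw [← intervalIntegral.integral_const_mul]; congr 1; ext θ; ring
  have e5 : ∫ θ in (-(π/2))..(π/2),
        (d * deriv (fun s => M s * deriv (fun t => f t / M t) s) θ) * Ψ θ
      = d * ∫ θ in (-(π/2))..(π/2),
        deriv (fun s => M s * deriv (fun t => f t / M t) s) θ * Ψ θ := by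
    rw [← intervalIntegral.integral_const_mul]; congr 1; ext θ; ring
  rw [e5, e1, e3, e2, e4]; ring

theorem GCI_characterization
    (θ₀ r d : ℝ) (hθ₀ : θ₀ ∈ Set.Ico (-(π/2)) (π/2)) (hr : 0 < r) (hd : 0 < d)
    (Z : ℝ) (hZ : Z = (1/π) * ∫ θ in (-(π/2))..(π/2), Real.exp (r * Real.cos (2*θ)))
    (M : ℝ → ℝ) (hM : ∀ θ, M θ = Real.exp (r * Real.cos (2*(θ - θ₀))) / Z)
    (Ψ : ℝ → ℝ) (hΨ : ContDiff ℝ (⊤ : ℕ∞) Ψ) (hΨper : Function.Periodic Ψ π) :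
    (∀ f : ℝ → ℝ, ContDiff ℝ (⊤ : ℕ∞) f → Function.Periodic f π →
        (1/π) * (∫ θ in (-(π/2))..(π/2), f θ * Real.sin (2*(θ - θ₀))) = 0 →
        (1/π) * (∫ θ in (-(π/2))..(π/2),
          (d * deriv (fun s => M s * deriv (fun t => f t / M t) s) θ) * Ψ θ) = 0)
    ↔ ∃ β : ℝ, ∀ θ : ℝ,
        -(d / M θ) * deriv (fun s => M s * deriv Ψ s) θ
          = β * Real.sin (2*(θ - θ₀)) := by
  have hπ : (1/π : ℝ) ≠ 0 := by positivity
  have hZpos : 0 < Z := by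
    rw [hZ]
    refine mul_pos (by positivity) (intervalIntegral.intervalIntegral_pos_of_pos
      (Continuous.intervalIntegrable (by fun_prop) _ _) (fun _ => Real.exp_pos _)
      (by linarith [Real.pi_pos]))
  have hM0 : ∀ θ, M θ ≠ 0 := fun θ => by rw [hM]; positivity
  have hshift : ∀ θ, 2 * (θ + π - θ₀) = 2 * (θ - θ₀) + 2 * π := fun θ => by ring
  have hMs : ContDiff ℝ (⊤ : ℕ∞) M := by
    rw [show M = _ from funext hM]
    fun_prop
  have hMp : Function.Periodic M π := fun θ => by
    rw [hM, hM, hshift, Real.cos_add_two_pi]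
  set S : ℝ → ℝ := fun θ => Real.sin (2 * (θ - θ₀)) with hS
  have hSs : ContDiff ℝ (⊤ : ℕ∞) S := by fun_prop
  have hSp : Function.Periodic S π := fun θ => by
    simp only [hS, hshift, Real.sin_add_two_pi]
  set G : ℝ → ℝ := fun θ => -(d / M θ) * deriv (fun s => M s * deriv Ψ s) θ with hG
  have hMΨp : Function.Periodic (fun s => M s * deriv Ψ s) π := fun x => by
    simp only [hMp x, periodic_deriv hΨper x]
  have hGs : ContDiff ℝ (⊤ : ℕ∞) G :=
    (contDiff_const.div hMs hM0).neg.mul (contDiff_deriv (hMs.mul (contDiff_deriv hΨ)))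
  have hGp : Function.Periodic G π := fun x => by
    simp only [hG, hMp x, periodic_deriv hMΨp x]
  have hadj : ∀ f : ℝ → ℝ, ContDiff ℝ (⊤ : ℕ∞) f → Function.Periodic f π →
      ∫ θ in (-(π/2))..(π/2), (d * deriv (fun s => M s * deriv (fun t => f t / M t) s) θ) * Ψ θ
        = -∫ θ in (-(π/2))..(π/2), f θ * G θ := fun f hf hfp =>
    integral_collision_mul d hMs hMp hM0 hf hfp hΨ hΨper
  constructor
  · intro ha
    have hSS : ∫ θ in (-(π/2))..(π/2), S θ * S θ ≠ 0 := by
      intro h0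
      have h1 := eq_zero_of_integral_mul_self_eq_zero hSs.continuous hSp h0 (θ₀ + π / 4)
      simp only [hS, show 2 * (θ₀ + π / 4 - θ₀) = π / 2 by ring, Real.sin_pi_div_two] at h1
      exact one_ne_zero h1
    set β : ℝ := (∫ θ in (-(π/2))..(π/2), G θ * S θ) / ∫ θ in (-(π/2))..(π/2), S θ * S θ with hβ
    set f : ℝ → ℝ := fun θ => G θ - β * S θ with hf
    have hfs : ContDiff ℝ (⊤ : ℕ∞) f := hGs.sub (contDiff_const.mul hSs)
    have hfp : Function.Periodic f π := fun x => by simp only [hf, hGp x, hSp x]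
    have hGc := hGs.continuous
    have hSc := hSs.continuous
    have hfc := hfs.continuous
    have hfS : ∫ θ in (-(π/2))..(π/2), f θ * S θ = 0 := by
      have : ∀ θ, f θ * S θ = G θ * S θ - β * (S θ * S θ) := fun θ => by simp only [hf]; ring
      simp only [this]
      refine (integral_sub_const_mul (hGc.mul hSc) (hSc.mul hSc) β _ _).trans ?_
      simp only [Pi.mul_apply]
      rw [hβ, div_mul_cancel₀ _ hSS, sub_self]
    have hfG : ∫ θ in (-(π/2))..(π/2), f θ * G θ = 0 := by
      have h1 := (mul_eq_zero.1 (ha f hfs hfp (by rw [hfS, mul_zero]))).resolve_left hπ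
      rw [hadj f hfs hfp] at h1
      exact neg_eq_zero.1 h1
    have hff : ∫ θ in (-(π/2))..(π/2), f θ * f θ = 0 := by
      have : ∀ θ, f θ * f θ = f θ * G θ - β * (f θ * S θ) := fun θ => by simp only [hf]; ring
      simp only [this]
      refine (integral_sub_const_mul (hfc.mul hGc) (hfc.mul hSc) β _ _).trans ?_
      simp only [Pi.mul_apply]
      rw [hfS, hfG, mul_zero, sub_self]
    exact ⟨β, fun θ => sub_eq_zero.1 (eq_zero_of_integral_mul_self_eq_zero hfc hfp hff θ)⟩
  · rintro ⟨β, hb⟩ f hf hfp hfS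
    have hfS' := (mul_eq_zero.1 hfS).resolve_left hπ
    have : ∀ θ, f θ * G θ = β * (f θ * Real.sin (2 * (θ - θ₀))) := fun θ => by
      rw [show G θ = _ from hb θ]; ring
    rw [hadj f hf hfp]
    simp only [this]
    rw [intervalIntegral.integral_const_mul, hfS', mul_zero, neg_zero, mul_zero]
end

section
/- Let r > 0 and set M₀(θ) = e^{r cos 2θ}/Z(r), Z(r) = (1/π)∫_{-π/2}^{π/2} e^{r cos 2θ} dθ. Define g(θ) = (1/2r) ( θ − (π/2) · (∫₀^θ e^{−r cos 2θ'} dθ') / (∫₀^{π/2} e^{−r cos 2θ'} dθ') ). Then: (i) g(0) = 0 and g(π/2) = 0; (ii) g'(θ) = (1/2r)(1 − 1/(M₀(θ) Z(r)²)) for all θ; (iii) ∂_θ( M₀(θ) g'(θ) ) = − sin(2θ) · M₀(θ) for all θ. -/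
/-!
Write `D = ∫₀^{π/2} e^{-r cos 2θ} dθ`. The reflection `θ ↦ π/2 - θ` and the translation
`θ ↦ θ - π/2` both turn `cos 2θ` into `-cos 2θ`, so the two halves of the integral defining `Z`
each equal `D`, i.e. `π Z = 2 D` (`integral_exp_cos_eq`). The fundamental theorem of calculus then
gives `g'`, and `M₀ g' = (M₀ - Z⁻²) / (2r)` differs from `M₀ / (2r)` by a constant, so its
derivative is that of `M₀ / (2r)`.
-/

open scoped Real
open MeasureTheory

/-- Each of the halves `[-π/2, 0]` and `[0, π/2]` contributes the same integral, because a
translation, respectively a reflection, by `π/2` reverses the sign of `cos 2θ`. -/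
lemma integral_exp_cos_eq (r : ℝ) :
    ∫ θ in (-(π/2))..(π/2), Real.exp (r * Real.cos (2*θ)) =
      2 * ∫ θ in (0:ℝ)..(π/2), Real.exp (-r * Real.cos (2*θ)) := by
  have hi : ∀ a b : ℝ,
      IntervalIntegrable (fun θ => Real.exp (r * Real.cos (2*θ))) volume a b :=
    fun a b => (by fun_prop : Continuous fun θ : ℝ =>
      Real.exp (r * Real.cos (2*θ))).intervalIntegrable a b
  rw [← intervalIntegral.integral_add_adjacent_intervals (hi (-(π/2)) 0) (hi 0 (π/2))]
  have h1 : ∫ θ in (-(π/2))..0, Real.exp (r * Real.cos (2*θ)) =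
      ∫ θ in (0:ℝ)..(π/2), Real.exp (-r * Real.cos (2*θ)) := by
    have h := intervalIntegral.integral_comp_sub_right (a := 0) (b := π/2)
      (fun θ => Real.exp (r * Real.cos (2*θ))) (π/2)
    rw [zero_sub, sub_self] at h
    rw [← h]
    congr 1 with θ
    rw [show 2 * (θ - π/2) = 2*θ - π by ring, Real.cos_sub_pi]
    ring_nf
  have h2 : ∫ θ in (0:ℝ)..(π/2), Real.exp (r * Real.cos (2*θ)) =
      ∫ θ in (0:ℝ)..(π/2), Real.exp (-r * Real.cos (2*θ)) := by
    have h := intervalIntegral.integral_comp_sub_left (a := 0) (b := π/2)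
      (fun θ => Real.exp (r * Real.cos (2*θ))) (π/2)
    rw [sub_zero, sub_self] at h
    rw [← h]
    congr 1 with θ
    rw [show 2 * (π/2 - θ) = π - 2*θ by ring, Real.cos_pi_sub]
    ring_nf
  rw [h1, h2]
  ring

theorem GCI_profile_properties
    (r : ℝ) (hr : 0 < r)
    (Z : ℝ) (hZ : Z = (1/π) * ∫ θ in (-(π/2))..(π/2), Real.exp (r * Real.cos (2*θ)))
    (M₀ : ℝ → ℝ) (hM : ∀ θ, M₀ θ = Real.exp (r * Real.cos (2*θ)) / Z)
    (g : ℝ → ℝ)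
    (hg : ∀ θ, g θ = (1/(2*r)) * (θ - (π/2) *
        (∫ θ' in (0:ℝ)..θ, Real.exp (-r * Real.cos (2*θ'))) /
        (∫ θ' in (0:ℝ)..(π/2), Real.exp (-r * Real.cos (2*θ'))))) :
    g 0 = 0 ∧ g (π/2) = 0
    ∧ (∀ θ, deriv g θ = (1/(2*r)) * (1 - 1/(M₀ θ * Z^2)))
    ∧ (∀ θ, deriv (fun s => M₀ s * deriv g s) θ = -Real.sin (2*θ) * M₀ θ) := by
  rw [integral_exp_cos_eq] at hZ
  have hc : Continuous fun θ : ℝ => Real.exp (-r * Real.cos (2*θ)) := by fun_prop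
  set D := ∫ θ' in (0:ℝ)..(π/2), Real.exp (-r * Real.cos (2*θ')) with hD
  have hDpos : 0 < D :=
    intervalIntegral.intervalIntegral_pos_of_pos (hc.intervalIntegrable _ _)
      (fun θ => Real.exp_pos _) (by positivity)
  have hpi : 0 < π := Real.pi_pos
  have hZpos : 0 < Z := by rw [hZ]; positivity
  have hDZ : D = π * Z / 2 := by rw [hZ]; field_simp
  have hg' : ∀ θ, deriv g θ = (1/(2*r)) * (1 - 1/(M₀ θ * Z^2)) := by
    intro θ
    have hI : HasDerivAt (fun x => ∫ θ' in (0:ℝ)..x, Real.exp (-r * Real.cos (2*θ')))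
        (Real.exp (-r * Real.cos (2*θ))) θ :=
      intervalIntegral.integral_hasDerivAt_right (hc.intervalIntegrable _ _)
        (hc.stronglyMeasurableAtFilter _ _) hc.continuousAt
    have h := ((hasDerivAt_id θ).sub ((hI.const_mul (π/2)).div_const D)).const_mul (1/(2*r))
    have hg2 : HasDerivAt g _ θ := h.congr_of_eventuallyEq (.of_forall hg)
    rw [hg2.deriv, hM, hDZ, neg_mul, Real.exp_neg]
    have := Real.exp_pos (r * Real.cos (2*θ))
    field_simp
  refine ⟨by simp [hg], ?_, hg', fun θ => ?_⟩
  · rw [hg, ← hD, mul_div_assoc, div_self hDpos.ne']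
    ring
  · have hfun : (fun s => M₀ s * deriv g s) =
        fun s => (1/(2*r)) * (Real.exp (r * Real.cos (2*s)) / Z - 1/Z^2) := by
      funext s
      have := Real.exp_pos (r * Real.cos (2*s))
      rw [hg', hM]
      field_simp
    have h := (((((((hasDerivAt_id θ).const_mul 2).cos).const_mul r).exp).div_const Z).sub_const
      (1/Z^2)).const_mul (1/(2*r))
    rw [hfun, hM]
    refine h.deriv.trans ?_
    simp only [id]
    field_simp
end

section
/- Let r > 0, M₀(θ) = e^{r cos 2θ}/Z(r) with Z(r) = (1/π)∫_{-π/2}^{π/2} e^{r cos 2θ} dθ, and let g(θ) = (1/2r)( θ − (π/2)(∫₀^θ e^{−r cos 2θ'} dθ')/(∫₀^{π/2} e^{−r cos 2θ'} dθ') ). Then (1/π) ∫_{-π/2}^{π/2} sin(2θ) g(θ) M₀(θ) dθ = (1/(4r²)) (1 − 1/Z(r)²). -/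
/-!
Since `sin 2θ · e^{r cos 2θ}` is the derivative of `-e^{r cos 2θ} / (2r)` and `g` vanishes at
`±π/2`, integration by parts turns the left-hand side into the integral of
`e^{r cos 2θ} g'(θ) / (2r)`. The reflections `θ ↦ -θ` and `θ ↦ π/2 - θ` show that the normalising
integral of `e^{-r cos 2θ}` over `[0, π/2]` equals `πZ/2`, so `g' = (1 - e^{-r cos 2θ} / Z) / (2r)`
and the remaining integral is elementary.
-/

open scoped Real
open MeasureTheory

/-- The integrand is even, so the integral over `[-π/2, 0]` is the one over `[0, π/2]`. -/
lemma integral_exp_neg_cos_neg_half_pi (r : ℝ) :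
    (∫ θ in (0:ℝ)..(-(π/2)), Real.exp (-r * Real.cos (2*θ)))
      = -∫ θ in (0:ℝ)..(π/2), Real.exp (-r * Real.cos (2*θ)) := by
  have h := intervalIntegral.integral_comp_neg (a := 0) (b := π/2)
    (fun θ => Real.exp (-r * Real.cos (2*θ)))
  simp only [mul_neg, Real.cos_neg, neg_zero] at h
  rw [h, ← intervalIntegral.integral_symm]

/-- Evenness combined with the reflection `θ ↦ π/2 - θ`, which flips the sign of `cos 2θ`. -/
lemma integral_exp_cos_eq_two_mul (r : ℝ) :
    (∫ θ in (-(π/2))..(π/2), Real.exp (r * Real.cos (2*θ)))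
      = 2 * ∫ θ in (0:ℝ)..(π/2), Real.exp (-r * Real.cos (2*θ)) := by
  have hint : ∀ a b : ℝ, IntervalIntegrable (fun θ => Real.exp (r * Real.cos (2*θ))) volume a b :=
    fun a b => Continuous.intervalIntegrable (by fun_prop) a b
  have heven := integral_exp_neg_cos_neg_half_pi (-r)
  rw [neg_neg] at heven
  have hrefl := intervalIntegral.integral_comp_sub_left (a := 0) (b := π/2)
    (fun θ => Real.exp (r * Real.cos (2*θ))) (π/2)
  have hcos : ∀ θ : ℝ, r * Real.cos (2 * (π/2 - θ)) = -r * Real.cos (2*θ) := by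
    intro θ
    rw [show 2 * (π/2 - θ) = π - 2*θ by ring, Real.cos_pi_sub]
    ring
  simp only [hcos, sub_self, sub_zero] at hrefl
  rw [← intervalIntegral.integral_add_adjacent_intervals (hint _ 0) (hint 0 _),
    intervalIntegral.integral_symm, heven, hrefl]
  ring

theorem GCI_sin_average
    (r : ℝ) (hr : 0 < r)
    (Z : ℝ) (hZ : Z = (1/π) * ∫ θ in (-(π/2))..(π/2), Real.exp (r * Real.cos (2*θ)))
    (M₀ : ℝ → ℝ) (hM : ∀ θ, M₀ θ = Real.exp (r * Real.cos (2*θ)) / Z)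
    (g : ℝ → ℝ)
    (hg : ∀ θ, g θ = (1/(2*r)) * (θ - (π/2) *
        (∫ θ' in (0:ℝ)..θ, Real.exp (-r * Real.cos (2*θ'))) /
        (∫ θ' in (0:ℝ)..(π/2), Real.exp (-r * Real.cos (2*θ'))))) :
    (1/π) * ∫ θ in (-(π/2))..(π/2), Real.sin (2*θ) * g θ * M₀ θ
      = (1/(4*r^2)) * (1 - 1/Z^2) := by
  have hpi := Real.pi_pos
  have hneg := integral_exp_neg_cos_neg_half_pi r
  have htwo := integral_exp_cos_eq_two_mul r
  have hJpos : 0 < ∫ θ in (0:ℝ)..(π/2), Real.exp (-r * Real.cos (2*θ)) :=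
    intervalIntegral.intervalIntegral_pos_of_pos
      (Continuous.intervalIntegrable (by fun_prop) _ _) (fun _ => Real.exp_pos _) (by positivity)
  set J := ∫ θ in (0:ℝ)..(π/2), Real.exp (-r * Real.cos (2*θ)) with hJ
  have hZJ : J = π * Z / 2 := by
    rw [hZ, htwo]; field_simp
  have hZpos : 0 < Z := by
    rw [hZ, htwo]; positivity
  have hI : (∫ θ in (-(π/2))..(π/2), Real.exp (r * Real.cos (2*θ))) = π * Z := by
    rw [htwo, hZJ]; ring
  have hg_right : g (π/2) = 0 := by
    rw [hg, ← hJ]; field_simp; ring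
  have hg_left : g (-(π/2)) = 0 := by
    rw [hg, hneg]; field_simp; ring
  have hg_deriv : ∀ θ, HasDerivAt g
      ((1/(2*r)) * (1 - Real.exp (-r * Real.cos (2*θ)) / Z)) θ := by
    intro θ
    have hcont : Continuous fun θ : ℝ => Real.exp (-r * Real.cos (2*θ)) := by fun_prop
    have hprim := hcont.integral_hasStrictDerivAt 0 θ |>.hasDerivAt
    have h := (((hasDerivAt_id θ).sub ((hprim.const_mul (π/2)).div_const J)).const_mul (1/(2*r)))
    rw [show g = _ from funext hg]
    refine h.congr_deriv ?_
    rw [hZJ]; field_simp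
  have hE_deriv : ∀ θ : ℝ, HasDerivAt (fun θ => -Real.exp (r * Real.cos (2*θ)) / (2*r))
      (Real.sin (2*θ) * Real.exp (r * Real.cos (2*θ))) θ := by
    intro θ
    have h := ((((((hasDerivAt_id θ).const_mul 2).cos).const_mul r).exp).neg).div_const (2*r)
    refine h.congr_deriv ?_
    simp only [id]
    field_simp
  have hparts := intervalIntegral.integral_mul_deriv_eq_deriv_mul
    (a := -(π/2)) (b := π/2) (fun θ _ => hg_deriv θ) (fun θ _ => hE_deriv θ)
    (Continuous.intervalIntegrable (by fun_prop) _ _)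
    (Continuous.intervalIntegrable (by fun_prop) _ _)
  rw [hg_right, hg_left] at hparts
  have hrest : ∀ θ : ℝ, (1/(2*r)) * (1 - Real.exp (-r * Real.cos (2*θ)) / Z)
      * (-Real.exp (r * Real.cos (2*θ)) / (2*r))
      = (-1/(4*r^2)) * (Real.exp (r * Real.cos (2*θ)) - 1/Z) := by
    intro θ
    rw [neg_mul, Real.exp_neg]
    field_simp
    ring
  have hlhs : ∀ θ : ℝ, Real.sin (2*θ) * g θ * M₀ θ
      = (1/Z) * (g θ * (Real.sin (2*θ) * Real.exp (r * Real.cos (2*θ)))) := by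
    intro θ
    rw [hM]; ring
  simp only [hrest] at hparts
  rw [intervalIntegral.integral_const_mul, intervalIntegral.integral_sub
    (Continuous.intervalIntegrable (by fun_prop) _ _) (by simp), hI,
    intervalIntegral.integral_const] at hparts
  simp only [hlhs]
  rw [intervalIntegral.integral_const_mul, hparts, smul_eq_mul]
  field_simp
  ring
end

section
/- Let r > 0, M₀(θ) = e^{r cos 2θ}/Z(r) with Z(r) = (1/π)∫_{-π/2}^{π/2} e^{r cos 2θ} dθ, and c(r) = (1/π)∫_{-π/2}^{π/2} cos(2θ) M₀(θ) dθ. Then (1/π)∫_{-π/2}^{π/2} cos(2θ) sin²(2θ) M₀(θ) dθ = (1/r)(1 − 2c(r)/r), and (1/π)∫_{-π/2}^{π/2} sin⁴(2θ) M₀(θ) dθ = (3/r²)(1 − 2c(r)/r). -/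
open scoped Real
open MeasureTheory

/-!
With `E θ = exp (r cos 2θ)` one has `E' = -2 r sin(2θ) E`. The functions `sin(2θ) E`,
`sin(2θ) cos(2θ) E` and `sin(2θ)^3 E` vanish at `±π/2`, so the integrals of their derivatives are
zero. Writing `⟨h⟩` for the normalised mean, this gives
`r ⟨sin²⟩ = c`, `r ⟨cos sin²⟩ = ⟨cos² - sin²⟩ = 1 - 2 ⟨sin²⟩` and `r ⟨sin⁴⟩ = 3 ⟨cos sin²⟩`,
and the two moments follow.
-/

/-- Integration by parts against the unnormalised von Mises weight: a primitive of the form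
`sin(2θ) g(θ) exp(r cos 2θ)` has no boundary terms on `[-π/2, π/2]`. -/
lemma integral_deriv_sin_mul_weight (r : ℝ) (g g' : ℝ → ℝ) (hg : ∀ θ, HasDerivAt g (g' θ) θ)
    (hg' : Continuous g') :
    ∫ θ in (-(π/2))..(π/2), (2 * Real.cos (2*θ) * g θ + Real.sin (2*θ) * g' θ
      - 2 * r * Real.sin (2*θ)^2 * g θ) * Real.exp (r * Real.cos (2*θ)) = 0 := by
  have hgc : Continuous g := continuous_iff_continuousAt.2 fun θ => (hg θ).continuousAt
  rw [intervalIntegral.integral_eq_sub_of_hasDerivAt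
    (f := fun θ => Real.sin (2*θ) * g θ * Real.exp (r * Real.cos (2*θ)))]
  · have h1 : 2 * (π/2) = π := by ring
    have h2 : 2 * (-(π/2)) = -π := by ring
    simp [h1, h2]
  · intro θ _
    have h2 : HasDerivAt (fun θ : ℝ => 2 * θ) 2 θ := by
      simpa using (hasDerivAt_id θ).const_mul 2
    refine ((h2.sin.fun_mul (hg θ)).fun_mul (h2.cos.const_mul r).exp).congr_deriv ?_
    ring
  · exact (by fun_prop : Continuous _).intervalIntegrable _ _

theorem von_Mises_mixed_moments
    (r : ℝ) (hr : 0 < r)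
    (Z : ℝ) (hZ : Z = (1/π) * ∫ θ in (-(π/2))..(π/2), Real.exp (r * Real.cos (2*θ)))
    (M₀ : ℝ → ℝ) (hM : ∀ θ, M₀ θ = Real.exp (r * Real.cos (2*θ)) / Z)
    (c : ℝ) (hc : c = (1/π) * ∫ θ in (-(π/2))..(π/2), Real.cos (2*θ) * M₀ θ) :
    (1/π) * (∫ θ in (-(π/2))..(π/2), Real.cos (2*θ) * (Real.sin (2*θ))^2 * M₀ θ)
        = (1/r) * (1 - 2*c/r)
    ∧ (1/π) * (∫ θ in (-(π/2))..(π/2), (Real.sin (2*θ))^4 * M₀ θ)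
        = (3/r^2) * (1 - 2*c/r) := by
  have hpi := Real.pi_pos
  have hInt : ∀ f : ℝ → ℝ, Continuous f →
      IntervalIntegrable f volume (-(π/2)) (π/2) := fun f hf => hf.intervalIntegrable _ _
  have hd2 (θ : ℝ) : HasDerivAt (fun θ : ℝ => 2 * θ) 2 θ := by
    simpa using (hasDerivAt_id θ).const_mul 2
  have hpos : 0 < ∫ θ in (-(π/2))..(π/2), Real.exp (r * Real.cos (2*θ)) :=
    intervalIntegral.intervalIntegral_pos_of_pos (hInt _ (by fun_prop))
      (fun θ => Real.exp_pos _) (by linarith)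
  have e1 := integral_deriv_sin_mul_weight r (fun _ => 1) (fun _ => 0)
    (fun θ => hasDerivAt_const θ 1) (by fun_prop)
  have e2 := integral_deriv_sin_mul_weight r (fun θ => Real.cos (2*θ))
    (fun θ => -Real.sin (2*θ) * 2) (fun θ => (hd2 θ).cos) (by fun_prop)
  have e3 := integral_deriv_sin_mul_weight r (fun θ => Real.sin (2*θ)^2)
    (fun θ => 2 * Real.sin (2*θ) * (Real.cos (2*θ) * 2))
    (fun θ => ((hd2 θ).sin.fun_pow 2).congr_deriv (by simp)) (by fun_prop)
  have hM' : ∀ h : ℝ → ℝ, ∫ θ in (-(π/2))..(π/2), h θ * M₀ θ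
      = (∫ θ in (-(π/2))..(π/2), h θ * Real.exp (r * Real.cos (2*θ))) / Z := by
    intro h
    simp only [hM, ← mul_div_assoc, intervalIntegral.integral_div]
  rw [hM'] at hc
  rw [hM', hM' (fun θ => Real.sin (2*θ)^4)]
  -- The unnormalised moments of `1`, `cos`, `sin²`, `cos sin²` and `sin⁴`.
  set I0 := ∫ θ in (-(π/2))..(π/2), Real.exp (r * Real.cos (2*θ)) with hI0
  set I1 := ∫ θ in (-(π/2))..(π/2), Real.cos (2*θ) * Real.exp (r * Real.cos (2*θ)) with hI1
  set S2 := ∫ θ in (-(π/2))..(π/2), Real.sin (2*θ)^2 * Real.exp (r * Real.cos (2*θ)) with hS2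
  set K := ∫ θ in (-(π/2))..(π/2),
    Real.cos (2*θ) * Real.sin (2*θ)^2 * Real.exp (r * Real.cos (2*θ)) with hK
  set S4 := ∫ θ in (-(π/2))..(π/2), Real.sin (2*θ)^4 * Real.exp (r * Real.cos (2*θ)) with hS4
  have f1 : 2 * I1 - 2 * r * S2 = 0 := by
    rw [← e1, hI1, hS2, ← intervalIntegral.integral_const_mul,
      ← intervalIntegral.integral_const_mul,
      ← intervalIntegral.integral_sub (hInt _ (by fun_prop)) (hInt _ (by fun_prop))]
    congr 1; ext θ; ring
  have f2 : 2 * I0 - 4 * S2 - 2 * r * K = 0 := by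
    rw [← e2, hI0, hS2, hK, ← intervalIntegral.integral_const_mul,
      ← intervalIntegral.integral_const_mul, ← intervalIntegral.integral_const_mul,
      ← intervalIntegral.integral_sub (hInt _ (by fun_prop)) (hInt _ (by fun_prop)),
      ← intervalIntegral.integral_sub (hInt _ (by fun_prop)) (hInt _ (by fun_prop))]
    congr 1; ext θ
    linear_combination (-2 * Real.exp (r * Real.cos (2*θ))) * Real.sin_sq_add_cos_sq (2*θ)
  have f3 : 6 * K - 2 * r * S4 = 0 := by
    rw [← e3, hK, hS4, ← intervalIntegral.integral_const_mul,
      ← intervalIntegral.integral_const_mul,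
      ← intervalIntegral.integral_sub (hInt _ (by fun_prop)) (hInt _ (by fun_prop))]
    congr 1; ext θ; ring
  have g1 : S2 = I1 / r := by field_simp; linarith
  have g2 : K = (I0 - 2 * (I1 / r)) / r := by rw [← g1]; field_simp; linarith
  have g3 : S4 = 3 * K / r := by field_simp; linarith
  have hne := hpos.ne'
  rw [hc, g3, g2, hZ]
  constructor <;> field_simp
end

section
/- For every r ≥ 0, ∫_{-π/2}^{π/2} sin²(2θ) cos(2θ) e^{r cos 2θ} dθ ≥ 0. -/
open scoped Real
open MeasureTheory

/-! Since `c * exp (r * c) ≥ c` for every real `c` when `r ≥ 0`, the integrand dominates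
`sin² (2θ) cos (2θ)`, whose primitive `sin³ (2θ) / 6` vanishes at both endpoints `±π/2`. -/

theorem sin_sq_cos_exp_integral_nonneg (r : ℝ) (hr : 0 ≤ r) :
    0 ≤ ∫ θ in (-(π/2))..(π/2),
        (Real.sin (2*θ))^2 * Real.cos (2*θ) * Real.exp (r * Real.cos (2*θ)) := by
  have hzero : ∫ θ in (-(π/2))..(π/2), (Real.sin (2*θ))^2 * Real.cos (2*θ) = 0 := by
    rw [intervalIntegral.integral_eq_sub_of_hasDerivAt
      (f := fun θ => (Real.sin (2*θ))^3 / 6)]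
    · have h1 : 2 * (π/2) = π := by ring
      have h2 : 2 * (-(π/2)) = -π := by ring
      simp [h1, h2]
    · intro θ _
      have h := ((((hasDerivAt_id' θ).const_mul 2).sin).pow 3).div_const 6
      refine HasDerivAt.congr_deriv h ?_
      norm_num
      ring
    · exact Continuous.intervalIntegrable (by fun_prop) _ _
  have hexp : ∀ c : ℝ, c ≤ c * Real.exp (r * c) := by
    intro c
    rcases le_total 0 c with hc | hc
    · have : 1 ≤ Real.exp (r * c) := Real.one_le_exp (mul_nonneg hr hc)
      nlinarith
    · have : Real.exp (r * c) ≤ 1 :=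
        Real.exp_le_one_iff.mpr (mul_nonpos_of_nonneg_of_nonpos hr hc)
      nlinarith
  rw [← hzero]
  apply intervalIntegral.integral_mono_on (by linarith [Real.pi_pos])
  · exact Continuous.intervalIntegrable (by fun_prop) _ _
  · exact Continuous.intervalIntegrable (by fun_prop) _ _
  · intro θ _
    rw [mul_assoc]
    exact mul_le_mul_of_nonneg_left (hexp _) (sq_nonneg _)
end

section
/- For every r ≥ 0, ∫_{-π/2}^{π/2} sin²(2θ) e^{r cos 2θ} dθ ≤ ∫_{-π/2}^{π/2} cos²(2θ) e^{r cos 2θ} dθ; consequently Z(r) ≤ 2 Z^{(2)}(r), where Z(r) = (1/π)∫_{-π/2}^{π/2} e^{r cos 2θ} dθ and Z^{(2)}(r) = (1/π)∫_{-π/2}^{π/2} cos²(2θ) e^{r cos 2θ} dθ. -/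
/-!
Put `s = sin 2θ`, `c = cos 2θ`, `E = exp (r c)`. Integration by parts amounts to
`(s c E / 2)' = (c² - s²) E - r s² c E`, and `(s³ / 6)' = s² c`. Hence, with
`K = s c E / 2 + r s³ / 6`, one has `c² E - s² E - K' = r s² c (E - 1)`, which is pointwise
nonnegative for `r ≥ 0` because `c` and `exp (r c) - 1` have the same sign. Since `K` vanishes at
`±π/2`, integrating gives the first inequality; the second follows from `s² + c² = 1`.
-/

open scoped Real
open MeasureTheory

theorem sin_sq_le_cos_sq_exp_integral (r : ℝ) (hr : 0 ≤ r) :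
    (∫ θ in (-(π/2))..(π/2), (Real.sin (2*θ))^2 * Real.exp (r * Real.cos (2*θ)))
      ≤ (∫ θ in (-(π/2))..(π/2), (Real.cos (2*θ))^2 * Real.exp (r * Real.cos (2*θ)))
    ∧ (1/π) * (∫ θ in (-(π/2))..(π/2), Real.exp (r * Real.cos (2*θ)))
      ≤ 2 * ((1/π) * ∫ θ in (-(π/2))..(π/2),
          (Real.cos (2*θ))^2 * Real.exp (r * Real.cos (2*θ))) := by
  have hle : (∫ θ in (-(π/2))..(π/2), (Real.sin (2*θ))^2 * Real.exp (r * Real.cos (2*θ)))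
      ≤ ∫ θ in (-(π/2))..(π/2), (Real.cos (2*θ))^2 * Real.exp (r * Real.cos (2*θ)) := by
    -- `K'` for `K = s c E / 2 + r s³ / 6`
    let k : ℝ → ℝ := fun θ =>
      ((Real.cos (2*θ))^2 - (Real.sin (2*θ))^2) * Real.exp (r * Real.cos (2*θ))
        - r * (Real.sin (2*θ))^2 * Real.cos (2*θ) * Real.exp (r * Real.cos (2*θ))
        + r * (Real.sin (2*θ))^2 * Real.cos (2*θ)
    have hk : Continuous k := by fun_prop
    have hK : ∀ θ : ℝ, HasDerivAt (fun θ : ℝ =>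
        Real.sin (2*θ) * Real.cos (2*θ) * Real.exp (r * Real.cos (2*θ)) / 2
          + r * (Real.sin (2*θ))^3 / 6) (k θ) θ := by
      intro θ
      have h2 : HasDerivAt (fun θ : ℝ => 2*θ) 2 θ := by
        simpa using (hasDerivAt_id θ).const_mul 2
      have hs := h2.sin
      have hc := h2.cos
      have hE := (hc.const_mul r).exp
      refine ((((hs.mul hc).mul hE).div_const 2).add
        (((hs.pow 3).const_mul r).div_const 6)).congr_deriv ?_
      simp only [k, Pi.mul_apply]
      push_cast
      ring
    have hint : ∫ θ in (-(π/2))..(π/2), k θ = 0 := by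
      rw [intervalIntegral.integral_eq_sub_of_hasDerivAt (fun θ _ => hK θ)
        (hk.intervalIntegrable _ _)]
      have h1 : 2 * (π/2) = π := by ring
      simp [h1]
    have hmono : (∫ θ in (-(π/2))..(π/2),
          ((Real.sin (2*θ))^2 * Real.exp (r * Real.cos (2*θ)) + k θ))
        ≤ ∫ θ in (-(π/2))..(π/2), (Real.cos (2*θ))^2 * Real.exp (r * Real.cos (2*θ)) := by
      apply intervalIntegral.integral_mono_on (by linarith [Real.pi_pos])
        (Continuous.intervalIntegrable (by fun_prop) _ _)
        (Continuous.intervalIntegrable (by fun_prop) _ _)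
      intro θ _
      have hsign : 0 ≤ Real.cos (2*θ) * (Real.exp (r * Real.cos (2*θ)) - 1) := by
        rcases le_total 0 (Real.cos (2*θ)) with h | h
        · exact mul_nonneg h (sub_nonneg.2 (Real.one_le_exp (mul_nonneg hr h)))
        · exact mul_nonneg_of_nonpos_of_nonpos h
            (sub_nonpos.2 (Real.exp_le_one_iff.2 (mul_nonpos_of_nonneg_of_nonpos hr h)))
      have hpos := mul_nonneg (mul_nonneg hr (sq_nonneg (Real.sin (2*θ)))) hsign
      simp only [k]
      linarith
    rwa [intervalIntegral.integral_add (Continuous.intervalIntegrable (by fun_prop) _ _)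
      (hk.intervalIntegrable _ _), hint, add_zero] at hmono
  refine ⟨hle, ?_⟩
  have hsum : (∫ θ in (-(π/2))..(π/2), Real.exp (r * Real.cos (2*θ)))
      = (∫ θ in (-(π/2))..(π/2), (Real.sin (2*θ))^2 * Real.exp (r * Real.cos (2*θ)))
        + ∫ θ in (-(π/2))..(π/2), (Real.cos (2*θ))^2 * Real.exp (r * Real.cos (2*θ)) := by
    rw [← intervalIntegral.integral_add (Continuous.intervalIntegrable (by fun_prop) _ _)
      (Continuous.intervalIntegrable (by fun_prop) _ _)]
    simp only [← add_mul, Real.sin_sq_add_cos_sq, one_mul]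
  rw [hsum, mul_left_comm]
  exact mul_le_mul_of_nonneg_left (by linarith) (by positivity)
end

section
/- For every r > 0, c(r) ≤ r/2, where c(r) = ((1/π)∫_{-π/2}^{π/2} cos(2θ) e^{r cos 2θ} dθ) / ((1/π)∫_{-π/2}^{π/2} e^{r cos 2θ} dθ). -/
open scoped Real
open MeasureTheory

/-!
Write `s = sin 2θ`, `c = cos 2θ`, `e = exp (r c)`. Integrating by parts three times gives
`∫ (r/2 - c) e = (r³/6) ∫ s⁴ e ≥ 0`, which is the claim after dividing by `∫ e > 0`.
The three integrations by parts are collected in one primitive, `F = (-s/2 + r s c/4 + r² s³/12) e`,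
which vanishes at `±π/2` and satisfies `F' = (r/2 - c) e - (r³/6) s⁴ e`.
-/

/-- The primitive `F` that encodes the three integrations by parts. -/
lemma hasDerivAt_primitive (r θ : ℝ) :
    HasDerivAt (fun θ : ℝ => (-(Real.sin (2*θ)) / 2 + r / 4 * (Real.sin (2*θ) * Real.cos (2*θ))
        + r^2 / 12 * Real.sin (2*θ)^3) * Real.exp (r * Real.cos (2*θ)))
      (r / 2 * Real.exp (r * Real.cos (2*θ)) - Real.cos (2*θ) * Real.exp (r * Real.cos (2*θ))
        - r^3 / 6 * Real.sin (2*θ)^4 * Real.exp (r * Real.cos (2*θ))) θ := by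
  have h2 : HasDerivAt (fun θ : ℝ => 2 * θ) 2 θ := by
    simpa using (hasDerivAt_id θ).const_mul (2 : ℝ)
  have hs := h2.sin
  have hc := h2.cos
  have he := (hc.const_mul r).exp
  refine ((((hs.neg.div_const 2).add ((hs.mul hc).const_mul (r / 4))).add
    ((hs.pow 3).const_mul (r^2 / 12))).mul he).congr_deriv ?_
  simp only [Pi.add_apply, Pi.mul_apply, Pi.neg_apply, Pi.pow_apply]
  have h1 := Real.sin_sq_add_cos_sq (2*θ)
  push_cast
  linear_combination (r / 2 * Real.exp (r * Real.cos (2*θ))) * h1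

theorem order_parameter_le_half_r (r : ℝ) (hr : 0 < r) :
    ((1/π) * ∫ θ in (-(π/2))..(π/2), Real.cos (2*θ) * Real.exp (r * Real.cos (2*θ)))
      / ((1/π) * ∫ θ in (-(π/2))..(π/2), Real.exp (r * Real.cos (2*θ)))
      ≤ r / 2 := by
  have hpi := Real.pi_pos
  have hab : -(π/2) < π/2 := by linarith
  have hi {f : ℝ → ℝ} (hf : Continuous f) : IntervalIntegrable f volume (-(π/2)) (π/2) :=
    hf.intervalIntegrable _ _
  have hZ : 0 < ∫ θ in (-(π/2))..(π/2), Real.exp (r * Real.cos (2*θ)) :=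
    intervalIntegral.intervalIntegral_pos_of_pos (hi (by fun_prop)) (fun _ => Real.exp_pos _) hab
  have hS : 0 ≤ ∫ θ in (-(π/2))..(π/2),
      r^3 / 6 * Real.sin (2*θ)^4 * Real.exp (r * Real.cos (2*θ)) :=
    intervalIntegral.integral_nonneg hab.le fun θ _ => by positivity
  have hF := intervalIntegral.integral_eq_sub_of_hasDerivAt
    (fun θ _ => hasDerivAt_primitive r θ) (hi (by fun_prop))
  have e1 : 2 * (π / 2) = π := by ring
  have e2 : 2 * -(π / 2) = -π := by ring
  rw [intervalIntegral.integral_sub (hi (by fun_prop)) (hi (by fun_prop)),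
    intervalIntegral.integral_sub (hi (by fun_prop)) (hi (by fun_prop)),
    intervalIntegral.integral_const_mul, e1, e2] at hF
  simp only [Real.sin_neg, Real.sin_pi] at hF
  rw [mul_div_mul_left _ _ (by positivity), div_le_iff₀ hZ]
  linarith
end

section
/- For every r > 0, 𝒜(r) := 1/(4 Z(r)²) − 1 + (3/2)·c(r)/r ≤ 0, where Z(r) = (1/π)∫_{-π/2}^{π/2} e^{r cos 2θ} dθ and c(r) = Z'(r)/Z(r). Consequently, for any d > 0, L > 0 and with α₁(r) = 1 − 1/Z(r)² > 0, the coefficient α₃(d, r, L²) = (d L² r)/(6 α₁(r)) · 𝒜(r) satisfies α₃ ≤ 0, and α₂(d, r, L²) = d(1 + L² r c(r)/(6 α₁(r))) satisfies α₂ ≥ 0. -/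
open scoped Real
open MeasureTheory

/-!
Write `s = sin 2θ`, `k = cos 2θ`, `w = exp (r k)` and `J f = ∫ f w` over `[-π/2, π/2]`, so that
`c = J k / J 1`. Since `s` vanishes at `±π/2`, derivatives of multiples of `s w` integrate to zero.
From `s w` this gives `J k = r J (s²) ≥ 0`, hence `0 ≤ c`. From
`(-s + (r/2) s k + (r²/6) s³) w` it gives `r J 1 - 2 J k = (r³/3) J (s⁴) ≥ 0`, hence `c / r ≤ 1/2`.
The bound `exp x ≥ 1 + x`, strict for `x ≠ 0`, together with `∫ (1 + r k) = π` gives `Z > 1`.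
The three sign claims follow, with `𝒜 ≤ 1/4 - 1 + 3/4 = 0`.
-/

lemma sin_two_mul_hasDerivAt (θ : ℝ) :
    HasDerivAt (fun θ : ℝ => Real.sin (2 * θ)) (2 * Real.cos (2 * θ)) θ := by
  have h := ((hasDerivAt_id θ).const_mul (2 : ℝ)).sin
  simpa [mul_comm] using h

lemma cos_two_mul_hasDerivAt (θ : ℝ) :
    HasDerivAt (fun θ : ℝ => Real.cos (2 * θ)) (-2 * Real.sin (2 * θ)) θ := by
  have h := ((hasDerivAt_id θ).const_mul (2 : ℝ)).cos
  simpa [mul_comm] using h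

lemma weight_hasDerivAt (r θ : ℝ) :
    HasDerivAt (fun θ : ℝ => Real.exp (r * Real.cos (2 * θ)))
      (Real.exp (r * Real.cos (2 * θ)) * (r * (-2 * Real.sin (2 * θ)))) θ :=
  ((cos_two_mul_hasDerivAt θ).const_mul r).exp

lemma sin_two_mul_half_pi : Real.sin (2 * (π / 2)) = 0 := by
  rw [show 2 * (π / 2) = π by ring, Real.sin_pi]

lemma sin_two_mul_neg_half_pi : Real.sin (2 * (-(π / 2))) = 0 := by
  rw [show 2 * (-(π / 2)) = -π by ring, Real.sin_neg, Real.sin_pi, neg_zero]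

/-- Integration by parts: the first moment equals `r ∫ sin² 2θ exp (r cos 2θ)`. -/
lemma first_moment_nonneg (r : ℝ) (hr : 0 < r) :
    0 ≤ ∫ θ in (-(π/2))..(π/2), Real.cos (2*θ) * Real.exp (r * Real.cos (2*θ)) := by
  have hpi : -(π/2) ≤ π/2 := by linarith [Real.pi_pos]
  have key : ∫ θ in (-(π/2))..(π/2), (Real.cos (2*θ) * Real.exp (r * Real.cos (2*θ))
      - r * Real.sin (2*θ)^2 * Real.exp (r * Real.cos (2*θ))) = 0 := by
    rw [intervalIntegral.integral_eq_sub_of_hasDerivAt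
      (f := fun θ => 1/2 * (Real.sin (2*θ) * Real.exp (r * Real.cos (2*θ))))]
    · simp only [sin_two_mul_half_pi, sin_two_mul_neg_half_pi]; ring
    · intro θ _
      refine HasDerivAt.congr_deriv (((sin_two_mul_hasDerivAt θ).mul (weight_hasDerivAt r θ)).const_mul (1/2 : ℝ)) ?_
      ring
    · exact Continuous.intervalIntegrable (by fun_prop) _ _
  rw [intervalIntegral.integral_sub (Continuous.intervalIntegrable (by fun_prop) _ _)
    (Continuous.intervalIntegrable (by fun_prop) _ _), sub_eq_zero] at key
  rw [key]
  exact intervalIntegral.integral_nonneg hpi fun θ _ => by positivity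

/-- The difference of the two sides is `(r³/3) ∫ sin⁴ 2θ exp (r cos 2θ)`. -/
lemma two_mul_first_moment_le (r : ℝ) (hr : 0 < r) :
    2 * (∫ θ in (-(π/2))..(π/2), Real.cos (2*θ) * Real.exp (r * Real.cos (2*θ)))
      ≤ r * ∫ θ in (-(π/2))..(π/2), Real.exp (r * Real.cos (2*θ)) := by
  have hpi : -(π/2) ≤ π/2 := by linarith [Real.pi_pos]
  have key : ∫ θ in (-(π/2))..(π/2), ((r * Real.exp (r * Real.cos (2*θ))
      - 2 * (Real.cos (2*θ) * Real.exp (r * Real.cos (2*θ))))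
      - r^3/3 * Real.sin (2*θ)^4 * Real.exp (r * Real.cos (2*θ))) = 0 := by
    rw [intervalIntegral.integral_eq_sub_of_hasDerivAt
      (f := fun θ => Real.sin (2*θ) * ((-1 + r/2 * Real.cos (2*θ) + r^2/6 * Real.sin (2*θ)^2)
        * Real.exp (r * Real.cos (2*θ))))]
    · simp only [sin_two_mul_half_pi, sin_two_mul_neg_half_pi]; ring
    · intro θ _
      have hs := sin_two_mul_hasDerivAt θ
      have hp := (((cos_two_mul_hasDerivAt θ).const_mul (r/2)).const_add (-1)).add
        ((hs.pow 2).const_mul (r^2/6))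
      refine HasDerivAt.congr_deriv (hs.mul (hp.mul (weight_hasDerivAt r θ))) ?_
      simp only [Pi.add_apply, Pi.pow_apply]
      push_cast
      linear_combination (r * Real.exp (r * Real.cos (2*θ))) * Real.sin_sq_add_cos_sq (2*θ)
    · exact Continuous.intervalIntegrable (by fun_prop) _ _
  rw [intervalIntegral.integral_sub (Continuous.intervalIntegrable (by fun_prop) _ _)
    (Continuous.intervalIntegrable (by fun_prop) _ _),
    intervalIntegral.integral_sub (Continuous.intervalIntegrable (by fun_prop) _ _)
    (Continuous.intervalIntegrable (by fun_prop) _ _),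
    intervalIntegral.integral_const_mul, intervalIntegral.integral_const_mul] at key
  have hn : 0 ≤ ∫ θ in (-(π/2))..(π/2),
      r^3/3 * Real.sin (2*θ)^4 * Real.exp (r * Real.cos (2*θ)) :=
    intervalIntegral.integral_nonneg hpi fun θ _ => by positivity
  linarith

lemma pi_lt_integral_weight (r : ℝ) (hr : 0 < r) :
    π < ∫ θ in (-(π/2))..(π/2), Real.exp (r * Real.cos (2*θ)) := by
  have hpi : -(π/2) < π/2 := by linarith [Real.pi_pos]
  have h1 : ∫ θ in (-(π/2))..(π/2), (1 + r * Real.cos (2*θ)) = π := by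
    rw [intervalIntegral.integral_eq_sub_of_hasDerivAt
      (f := fun θ => θ + r/2 * Real.sin (2*θ))]
    · simp only [sin_two_mul_half_pi, sin_two_mul_neg_half_pi]; ring
    · intro θ _
      refine HasDerivAt.congr_deriv ((hasDerivAt_id θ).add ((sin_two_mul_hasDerivAt θ).const_mul (r/2))) ?_
      ring
    · exact Continuous.intervalIntegrable (by fun_prop) _ _
  calc π = ∫ θ in (-(π/2))..(π/2), (1 + r * Real.cos (2*θ)) := h1.symm
    _ < _ := by
      apply intervalIntegral.integral_lt_integral_of_continuousOn_of_le_of_exists_lt hpi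
        (by fun_prop) (by fun_prop)
      · intro θ _
        linarith [Real.add_one_le_exp (r * Real.cos (2*θ))]
      · refine ⟨0, ⟨by linarith [Real.pi_pos], by linarith [Real.pi_pos]⟩, ?_⟩
        have := Real.add_one_lt_exp hr.ne'
        simp only [mul_zero, Real.cos_zero, mul_one]
        linarith

theorem curlyA_nonpos_and_coefficient_signs
    (r : ℝ) (hr : 0 < r)
    (Z c 𝒜 α₁ : ℝ)
    (hZ : Z = (1/π) * ∫ θ in (-(π/2))..(π/2), Real.exp (r * Real.cos (2*θ)))
    (hc : c = ((1/π) * ∫ θ in (-(π/2))..(π/2),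
        Real.cos (2*θ) * Real.exp (r * Real.cos (2*θ))) / Z)
    (h𝒜 : 𝒜 = 1/(4*Z^2) - 1 + (3/2) * (c/r))
    (hα₁ : α₁ = 1 - 1/Z^2) :
    𝒜 ≤ 0 ∧ 0 < α₁ ∧
    ∀ d L : ℝ, 0 < d → 0 < L →
      (d * L^2 * r)/(6*α₁) * 𝒜 ≤ 0 ∧ 0 ≤ d * (1 + L^2 * r * c/(6*α₁)) := by
  have hpi := Real.pi_pos
  have h0 := first_moment_nonneg r hr
  have h1 := two_mul_first_moment_le r hr
  have h2 := pi_lt_integral_weight r hr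
  have hZ1 : 1 < Z := by
    rw [hZ, one_div, ← div_eq_inv_mul, lt_div_iff₀ hpi]
    linarith
  have hZ0 : 0 < Z := by linarith
  have hc0 : 0 ≤ c := by rw [hc]; positivity
  have hcr : c / r ≤ 1/2 := by
    rw [div_le_iff₀ hr, hc, div_le_iff₀ hZ0, hZ]
    have := mul_le_mul_of_nonneg_left h1 (one_div_pos.mpr hpi).le
    linarith
  have hZsq : 1 < Z^2 := by nlinarith
  have hinv : 1/Z^2 < 1 := by
    rw [div_lt_one (by positivity)]
    exact hZsq
  have hA : 𝒜 ≤ 0 := by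
    have : 1/(4*Z^2) = 1/4 * (1/Z^2) := by field_simp
    rw [h𝒜, this]
    linarith
  have hα : 0 < α₁ := by linarith
  refine ⟨hA, hα, fun d L hd hL => ⟨?_, by positivity⟩⟩
  exact mul_nonpos_of_nonneg_of_nonpos (by positivity) hA
end

section
/- Let d > 0, L > 0, r > 0 and set Z(r) = (1/π)∫_{-π/2}^{π/2} e^{r cos 2θ} dθ, c(r) = Z'(r)/Z(r), α₁(r) = 1 − 1/Z(r)², 𝒜(r) = 1/(4Z(r)²) − 1 + (3/2)c(r)/r, α₂ = d(1 + L² r c(r)/(6 α₁(r))) and α₃ = (d L² r)/(6 α₁(r)) · 𝒜(r). Then α₂ > |α₃| if and only if 6 α₁(r)/(d r L²) > −(𝒜(r) + c(r)). In particular, if 𝒜(r) + c(r) ≥ 0, then α₂ > |α₃|, and hence the matrix A(θ₀) with entries a₁₁ = α₂ − α₃ cos 2θ₀, a₁₂ = a₂₁ = −α₃ sin 2θ₀, a₂₂ = α₂ + α₃ cos 2θ₀ is positive definite for every θ₀ ∈ ℝ. -/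
/-!
With `Jₙ = ∫ cosⁿ(2θ) exp(r cos 2θ) dθ` over `[-π/2, π/2]`, one has `c = J₁ / J₀`. The theorem follows
from the unconditional bounds `Z > 1` (so `α₁ > 0`) and `|𝒜| ≤ c`, valid for every `r > 0`: they give
`|α₃| ≤ d L² r c / (6 α₁) < α₂`, and they make the right-hand side of the equivalence true as well, its
left member being positive and `-(𝒜 + c)` nonpositive. Both sides of the equivalence are thus always
true, which is why the factor `d` in its denominator is harmless.

Integration by parts expresses the moments of `x = cos 2θ` against the weight `(1 - x²) exp(r x)` through
`J₀` and `J₁`.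
* `𝒜 ≤ c`: the first of these moments is nonnegative, which says `c ≤ r / 2`, whence even `𝒜 ≤ 0`.
* `𝒜 + c ≥ 0`: the Cauchy-Schwarz inequality between the moments of order `0, 1, 2` gives the
  Amos-type bound `(r² + 2) c² + r c ≥ r²`. For `r ≥ 1` it implies `c (1 + 3/(2r)) ≥ 1`; for `r ≤ 1` it is
  combined with `Z ≤ 1 + r²/2`.

Finally the quadratic form of the symbol matrix is `α₂ |v|² - α₃ m` with `|m| ≤ |v|²`, so `|α₃| < α₂`
makes it positive definite.
-/

open scoped Real
open MeasureTheory

/-- The principal symbol matrix of the stationary fiber orientation operator. -/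
noncomputable def fiberSymbolMatrix (α₂ α₃ θ₀ : ℝ) : Matrix (Fin 2) (Fin 2) ℝ :=
  !![α₂ - α₃ * Real.cos (2*θ₀), -(α₃ * Real.sin (2*θ₀));
     -(α₃ * Real.sin (2*θ₀)), α₂ + α₃ * Real.cos (2*θ₀)]

/-- The moment `∫ cosⁿ(2θ) exp(r cos 2θ) dθ` over `[-π/2, π/2]` (not normalized by `π`). -/
noncomputable def fiberMoment (r : ℝ) (n : ℕ) : ℝ :=
  ∫ θ in (-(π/2))..(π/2), Real.cos (2*θ) ^ n * Real.exp (r * Real.cos (2*θ))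

lemma fiberMoment_integrable (r : ℝ) (n : ℕ) :
    IntervalIntegrable (fun θ => Real.cos (2*θ) ^ n * Real.exp (r * Real.cos (2*θ)))
      volume (-(π/2)) (π/2) :=
  Continuous.intervalIntegrable (by fun_prop) _ _

lemma neg_half_pi_lt : -(π/2) < π/2 := by linarith [Real.pi_pos]

/-- Integration by parts: `sin(2θ) exp(r cos 2θ)` vanishes at both endpoints. -/
lemma fiberMoment_parts_zero (r : ℝ) :
    r * (fiberMoment r 0 - fiberMoment r 2) = fiberMoment r 1 := by
  have hd : ∀ θ ∈ Set.uIcc (-(π/2)) (π/2), HasDerivAt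
      (fun θ => Real.sin (2*θ) * Real.exp (r * Real.cos (2*θ)))
      (2 * (Real.cos (2*θ) ^ 1 * Real.exp (r * Real.cos (2*θ))
        - r * (Real.cos (2*θ) ^ 0 * Real.exp (r * Real.cos (2*θ))
          - Real.cos (2*θ) ^ 2 * Real.exp (r * Real.cos (2*θ))))) θ := by
    intro θ _
    have h2 : HasDerivAt (fun θ : ℝ => 2 * θ) 2 θ := by
      simpa using (hasDerivAt_id θ).const_mul (2:ℝ)
    have h := h2.sin.mul (h2.cos.const_mul r).exp
    refine h.congr_deriv ?_
    have hs := Real.sin_sq (2*θ)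
    linear_combination (-2 * r * Real.exp (r * Real.cos (2*θ))) * hs
  have h := intervalIntegral.integral_eq_sub_of_hasDerivAt hd
    (Continuous.intervalIntegrable (by fun_prop) _ _)
  have i0 := fiberMoment_integrable r 0
  have i1 := fiberMoment_integrable r 1
  have i2 := fiberMoment_integrable r 2
  rw [intervalIntegral.integral_const_mul,
    intervalIntegral.integral_sub i1 ((i0.sub i2).const_mul r),
    intervalIntegral.integral_const_mul, intervalIntegral.integral_sub i0 i2,
    show 2 * (π/2) = π by ring, show 2 * (-(π/2)) = -π by ring] at h
  simp only [Real.sin_neg, Real.sin_pi] at h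
  unfold fiberMoment
  linarith

/-- Integration by parts with the boundary term `sin(2θ) cosᵏ⁺¹(2θ) exp(r cos 2θ)`. -/
lemma fiberMoment_parts_succ (r : ℝ) (k : ℕ) :
    r * (fiberMoment r (k+1) - fiberMoment r (k+3))
      = (k+2) * fiberMoment r (k+2) - (k+1) * fiberMoment r k := by
  have hd : ∀ θ ∈ Set.uIcc (-(π/2)) (π/2), HasDerivAt
      (fun θ => Real.sin (2*θ) * (Real.cos (2*θ) ^ (k+1) * Real.exp (r * Real.cos (2*θ))))
      (2 * (((k+2) * (Real.cos (2*θ) ^ (k+2) * Real.exp (r * Real.cos (2*θ)))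
          - (k+1) * (Real.cos (2*θ) ^ k * Real.exp (r * Real.cos (2*θ))))
        - r * (Real.cos (2*θ) ^ (k+1) * Real.exp (r * Real.cos (2*θ))
          - Real.cos (2*θ) ^ (k+3) * Real.exp (r * Real.cos (2*θ))))) θ := by
    intro θ _
    have h2 : HasDerivAt (fun θ : ℝ => 2 * θ) 2 θ := by
      simpa using (hasDerivAt_id θ).const_mul (2:ℝ)
    have h := h2.sin.mul ((h2.cos.pow (k+1)).mul (h2.cos.const_mul r).exp)
    refine h.congr_deriv ?_
    have hs := Real.sin_sq (2*θ)
    simp only [Nat.add_sub_cancel, Pi.mul_apply, Pi.pow_apply]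
    push_cast
    linear_combination (-2 * Real.exp (r * Real.cos (2*θ)) * Real.cos (2*θ) ^ k
      * ((k+1) + r * Real.cos (2*θ))) * hs
  have h := intervalIntegral.integral_eq_sub_of_hasDerivAt hd
    (Continuous.intervalIntegrable (by fun_prop) _ _)
  have i0 := fiberMoment_integrable r k
  have i1 := fiberMoment_integrable r (k+1)
  have i2 := fiberMoment_integrable r (k+2)
  have i3 := fiberMoment_integrable r (k+3)
  rw [intervalIntegral.integral_const_mul,
    intervalIntegral.integral_sub ((i2.const_mul _).sub (i0.const_mul _)) ((i1.sub i3).const_mul r),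
    intervalIntegral.integral_sub (i2.const_mul _) (i0.const_mul _),
    intervalIntegral.integral_const_mul, intervalIntegral.integral_const_mul,
    intervalIntegral.integral_const_mul, intervalIntegral.integral_sub i1 i3,
    show 2 * (π/2) = π by ring, show 2 * (-(π/2)) = -π by ring] at h
  simp only [Real.sin_neg, Real.sin_pi] at h
  unfold fiberMoment
  linarith

lemma fiberMoment_zero_zero : fiberMoment 0 0 = π := by
  simp [fiberMoment]

lemma fiberMoment_zero_one : fiberMoment 0 1 = 0 := by
  simpa using (fiberMoment_parts_zero 0).symm

lemma fiberMoment_zero_two : fiberMoment 0 2 = π / 2 := by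
  have h := fiberMoment_parts_succ 0 0
  rw [fiberMoment_zero_zero] at h
  norm_num at h
  linarith

lemma fiberMoment_zero_three : fiberMoment 0 3 = 0 := by
  have h := fiberMoment_parts_succ 0 1
  rw [fiberMoment_zero_one] at h
  norm_num at h
  exact h

/-- `Z > 1`, from the strict inequality `1 + y < exp y` at `θ = 0`. -/
lemma pi_lt_fiberMoment {r : ℝ} (hr : 0 < r) : π < fiberMoment r 0 := by
  have h := intervalIntegral.integral_lt_integral_of_continuousOn_of_le_of_exists_lt
    (f := fun θ => Real.cos (2*θ) ^ 0 * Real.exp (0 * Real.cos (2*θ))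
      + r * (Real.cos (2*θ) ^ 1 * Real.exp (0 * Real.cos (2*θ))))
    (g := fun θ => Real.cos (2*θ) ^ 0 * Real.exp (r * Real.cos (2*θ)))
    neg_half_pi_lt (by fun_prop) (by fun_prop)
    (fun θ _ => by
      have := Real.add_one_le_exp (r * Real.cos (2*θ))
      simp
      linarith)
    ⟨0, ⟨by linarith [Real.pi_pos], by linarith [Real.pi_pos]⟩, by
      have := Real.add_one_lt_exp hr.ne'
      simp
      linarith⟩
  rw [intervalIntegral.integral_add (fiberMoment_integrable 0 0)
    ((fiberMoment_integrable 0 1).const_mul r), intervalIntegral.integral_const_mul] at h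
  change fiberMoment 0 0 + r * fiberMoment 0 1 < fiberMoment r 0 at h
  rw [fiberMoment_zero_zero, fiberMoment_zero_one] at h
  linarith

/-- `Z ≤ 1 + r²/2` for `r ≤ 1`, from `exp y ≤ 1 + y + y²` for `|y| ≤ 1`. -/
lemma fiberMoment_le {r : ℝ} (hr : 0 < r) (hr1 : r ≤ 1) :
    fiberMoment r 0 ≤ π * (1 + r^2/2) := by
  have i0 := fiberMoment_integrable 0 0
  have i1 := fiberMoment_integrable 0 1
  have i2 := fiberMoment_integrable 0 2
  have h := intervalIntegral.integral_mono_on neg_half_pi_lt.le (fiberMoment_integrable r 0)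
    ((i0.add (i1.const_mul r)).add (i2.const_mul (r^2)))
    (fun θ _ => by
      have hy : |r * Real.cos (2*θ)| ≤ 1 := by
        rw [abs_mul, abs_of_pos hr]
        exact mul_le_one₀ hr1 (abs_nonneg _) (Real.abs_cos_le_one _)
      have := (abs_le.mp (Real.abs_exp_sub_one_sub_id_le hy)).2
      simp
      linarith [mul_pow r (Real.cos (2*θ)) 2])
  rw [intervalIntegral.integral_add (i0.add (i1.const_mul r)) (i2.const_mul _),
    intervalIntegral.integral_add i0 (i1.const_mul r), intervalIntegral.integral_const_mul,
    intervalIntegral.integral_const_mul] at h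
  change fiberMoment r 0 ≤ fiberMoment 0 0 + r * fiberMoment 0 1 + r^2 * fiberMoment 0 2 at h
  rw [fiberMoment_zero_zero, fiberMoment_zero_one, fiberMoment_zero_two] at h
  linarith

/-- Compares `x (1 - x²) exp(r x)` pointwise with `x (1 - x²)`, whose integral vanishes. -/
lemma fiberMoment_three_le_one {r : ℝ} (hr : 0 < r) : fiberMoment r 3 ≤ fiberMoment r 1 := by
  have h := intervalIntegral.integral_mono_on neg_half_pi_lt.le
    ((fiberMoment_integrable 0 1).sub (fiberMoment_integrable 0 3))
    ((fiberMoment_integrable r 1).sub (fiberMoment_integrable r 3))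
    (fun θ _ => by
      have hx : 0 ≤ Real.cos (2*θ) * (Real.exp (r * Real.cos (2*θ)) - 1) := by
        rcases le_total 0 (Real.cos (2*θ)) with h0 | h0
        · exact mul_nonneg h0 (sub_nonneg.mpr (Real.one_le_exp (by positivity)))
        · exact mul_nonneg_of_nonpos_of_nonpos h0
            (sub_nonpos.mpr (Real.exp_le_one_iff.mpr (mul_nonpos_of_nonneg_of_nonpos hr.le h0)))
      have := mul_nonneg hx (sub_nonneg.mpr (Real.cos_sq_le_one (2*θ)))
      simp
      linarith)
  rw [intervalIntegral.integral_sub (fiberMoment_integrable 0 1) (fiberMoment_integrable 0 3),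
    intervalIntegral.integral_sub (fiberMoment_integrable r 1) (fiberMoment_integrable r 3)] at h
  change fiberMoment 0 1 - fiberMoment 0 3 ≤ fiberMoment r 1 - fiberMoment r 3 at h
  rw [fiberMoment_zero_one, fiberMoment_zero_three] at h
  linarith

lemma fiberMoment_two_le_zero (r : ℝ) : fiberMoment r 2 ≤ fiberMoment r 0 :=
  intervalIntegral.integral_mono_on neg_half_pi_lt.le (fiberMoment_integrable r 2)
    (fiberMoment_integrable r 0) (fun θ _ => by
      have := Real.cos_sq_le_one (2*θ)
      have := Real.exp_pos (r * Real.cos (2*θ))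
      simp
      nlinarith)

/-- The Cauchy-Schwarz inequality for `1` and `x = cos 2θ` in the weight `(1 - x²) exp(r x)`. -/
lemma fiberMoment_cauchy (r : ℝ) :
    (fiberMoment r 1 - fiberMoment r 3)^2
      ≤ (fiberMoment r 0 - fiberMoment r 2) * (fiberMoment r 2 - fiberMoment r 4) := by
  have i0 := fiberMoment_integrable r 0
  have i1 := fiberMoment_integrable r 1
  have i2 := fiberMoment_integrable r 2
  have i3 := fiberMoment_integrable r 3
  have i4 := fiberMoment_integrable r 4
  have key : ∀ t : ℝ, 0 ≤ (fiberMoment r 0 - fiberMoment r 2) * (t * t)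
      + (2 * (fiberMoment r 1 - fiberMoment r 3)) * t + (fiberMoment r 2 - fiberMoment r 4) := by
    intro t
    have h : 0 ≤ ∫ θ in (-(π/2))..(π/2),
        (((t*t) * (Real.cos (2*θ) ^ 0 * Real.exp (r * Real.cos (2*θ))
            - Real.cos (2*θ) ^ 2 * Real.exp (r * Real.cos (2*θ)))
          + (2*t) * (Real.cos (2*θ) ^ 1 * Real.exp (r * Real.cos (2*θ))
            - Real.cos (2*θ) ^ 3 * Real.exp (r * Real.cos (2*θ))))
          + (Real.cos (2*θ) ^ 2 * Real.exp (r * Real.cos (2*θ))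
            - Real.cos (2*θ) ^ 4 * Real.exp (r * Real.cos (2*θ)))) := by
      refine intervalIntegral.integral_nonneg neg_half_pi_lt.le (fun θ _ => ?_)
      have h1 := sub_nonneg.mpr (Real.cos_sq_le_one (2*θ))
      have h2 := mul_nonneg (mul_nonneg h1 (sq_nonneg (Real.cos (2*θ) + t)))
        (Real.exp_pos (r * Real.cos (2*θ))).le
      refine h2.trans_eq ?_
      ring
    rw [intervalIntegral.integral_add
        (((i0.sub i2).const_mul _).add ((i1.sub i3).const_mul _)) (i2.sub i4),
      intervalIntegral.integral_add ((i0.sub i2).const_mul _) ((i1.sub i3).const_mul _),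
      intervalIntegral.integral_const_mul, intervalIntegral.integral_const_mul,
      intervalIntegral.integral_sub i0 i2, intervalIntegral.integral_sub i1 i3,
      intervalIntegral.integral_sub i2 i4] at h
    unfold fiberMoment
    linarith
  have := discrim_le_zero key
  rw [discrim] at this
  linarith

/-- The bounds on the order parameter `c = J₁ / J₀`: nonnegativity, `c ≤ r/2`, and the Amos-type lower
bound obtained from the Cauchy-Schwarz inequality. -/
lemma order_parameter_bounds {r c : ℝ} (hr : 0 < r) (hc : c = fiberMoment r 1 / fiberMoment r 0) :
    0 ≤ c ∧ c ≤ r / 2 ∧ r^2 ≤ (r^2 + 2) * c^2 + r * c := by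
  have hJ : 0 < fiberMoment r 0 := Real.pi_pos.trans (pi_lt_fiberMoment hr)
  have hJ1 : fiberMoment r 1 = c * fiberMoment r 0 := by rw [hc]; field_simp
  have p0 := fiberMoment_parts_zero r
  have p1 := fiberMoment_parts_succ r 0
  have p2 := fiberMoment_parts_succ r 1
  have n0 := fiberMoment_two_le_zero r
  have n1 := fiberMoment_three_le_one hr
  have cs := fiberMoment_cauchy r
  norm_num at p1 p2
  rw [hJ1] at p0 p1 p2 n1 cs
  generalize fiberMoment r 0 = J at *
  generalize fiberMoment r 2 = J2 at *
  generalize fiberMoment r 3 = J3 at *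
  generalize fiberMoment r 4 = J4 at *
  -- The weighted moments of order `0, 1, 2`, cleared of denominators.
  have s0 : r * (J - J2) = c * J := p0
  have s1 : r^2 * (c * J - J3) = (r - 2 * c) * J := by linear_combination r * p1 - 2 * p0
  have s2 : r^3 * (J2 - J4) = (c * r^2 - 3 * r + 6 * c) * J := by
    linear_combination r^2 * p2 - 3 * s1
  refine ⟨?_, ?_, ?_⟩
  · have : 0 ≤ c * J := by rw [← s0]; exact mul_nonneg hr.le (by linarith)
    exact nonneg_of_mul_nonneg_left this hJ
  · have : 0 ≤ (r - 2 * c) * J := by rw [← s1]; exact mul_nonneg (by positivity) (by linarith)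
    linarith [nonneg_of_mul_nonneg_left this hJ]
  · have h : ((r - 2 * c) * J)^2 ≤ (c * J) * ((c * r^2 - 3 * r + 6 * c) * J) := by
      rw [← s0, ← s1, ← s2]
      have := mul_le_mul_of_nonneg_left cs (by positivity : 0 ≤ r^4)
      linarith
    have h' : 0 ≤ (c * (c * r^2 - 3 * r + 6 * c) - (r - 2 * c)^2) * J^2 := by linarith
    have := nonneg_of_mul_nonneg_left h' (by positivity)
    linarith

/-- The quadratic `(r² + 2) c² + r c - r²` increases in `c ≥ 0`, so `c` dominates any `t` at which it
is nonpositive. -/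
lemma le_of_amos {r c t : ℝ} (hr : 0 < r) (hc : 0 ≤ c) (hq : r^2 ≤ (r^2 + 2) * c^2 + r * c)
    (ht : (r^2 + 2) * t^2 + r * t ≤ r^2) : t ≤ c := by
  by_contra! hlt
  have h1 : c^2 ≤ t^2 := by gcongr
  have h2 := mul_lt_mul_of_pos_left hlt hr
  have h3 := mul_le_mul_of_nonneg_left h1 (by positivity : 0 ≤ r^2 + 2)
  linarith

/-- `|𝒜| ≤ c`. -/
lemma abs_anisotropy_le {r c Z 𝒜 : ℝ} (hr : 0 < r) (hc : c = fiberMoment r 1 / fiberMoment r 0)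
    (hZ : fiberMoment r 0 = π * Z) (hZ1 : 1 < Z)
    (h𝒜 : 𝒜 = 1/(4*Z^2) - 1 + (3/2) * (c/r)) : |𝒜| ≤ c := by
  obtain ⟨hc0, hc1, hq⟩ := order_parameter_bounds hr hc
  have hcr : c / r ≤ 1/2 := by rw [div_le_iff₀ hr]; linarith
  have hZinv : 1/(4*Z^2) ≤ 1/4 := by
    rw [div_le_div_iff₀ (by positivity) (by norm_num)]
    nlinarith
  have hZpos : 0 < 1/(4*Z^2) := by positivity
  rw [abs_le]
  refine ⟨?_, by linarith⟩
  suffices h : 1 - 1/(4*Z^2) ≤ c + (3/2) * (c/r) by linarith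
  have hcc : c + (3/2) * (c/r) = c * ((2*r+3)/(2*r)) := by field_simp
  rw [hcc]
  rcases le_total 1 r with h1 | h1
  · have ht : 2*r/(2*r+3) ≤ c := by
      refine le_of_amos hr hc0 hq ?_
      rw [← sub_nonneg]
      have : r^2 - ((r^2 + 2) * (2*r/(2*r+3))^2 + r * (2*r/(2*r+3)))
          = r^2 * (8*r - 5) / (2*r+3)^2 := by field_simp; ring
      rw [this]
      have : 0 ≤ 8*r - 5 := by linarith
      positivity
    have : 1 ≤ c * ((2*r+3)/(2*r)) := by
      rw [div_le_iff₀ (by positivity)] at ht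
      rw [← mul_div_assoc, le_div_iff₀ (by positivity)]
      linarith
    linarith
  · have hZle : Z ≤ 1 + r^2/2 := by
      have := fiberMoment_le hr h1
      rw [hZ] at this
      exact le_of_mul_le_mul_left this Real.pi_pos
    -- `(1 + y)⁻² ≥ 1 - 2 y` with `y = r² / 2`.
    have hZlow : (1 - r^2)/4 ≤ 1/(4*Z^2) := by
      rw [div_le_div_iff₀ (by norm_num) (by positivity)]
      have hr2 : r^2 ≤ 1 := by nlinarith
      have hsq : Z^2 ≤ (1 + r^2/2)^2 := by gcongr
      have := mul_le_mul_of_nonneg_left hsq (sub_nonneg.mpr hr2)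
      nlinarith [sq_nonneg (r^2), mul_nonneg (sq_nonneg r) (sq_nonneg (r^2))]
    have ht : r*(3+r^2)/(2*(2*r+3)) ≤ c := by
      refine le_of_amos hr hc0 hq ?_
      rw [← sub_nonneg]
      have : r^2 - ((r^2 + 2) * (r*(3+r^2)/(2*(2*r+3)))^2 + r * (r*(3+r^2)/(2*(2*r+3))))
          = r^3 * (36 - 11*r - 4*r^2 - 8*r^3 - r^5) / (4*(2*r+3)^2) := by field_simp; ring
      rw [this]
      have e2 : r^2 ≤ 1 := pow_le_one₀ hr.le h1
      have e3 : r^3 ≤ 1 := pow_le_one₀ hr.le h1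
      have e5 : r^5 ≤ 1 := pow_le_one₀ hr.le h1
      have : 0 ≤ 36 - 11*r - 4*r^2 - 8*r^3 - r^5 := by linarith
      positivity
    have : (3+r^2)/4 ≤ c * ((2*r+3)/(2*r)) := by
      rw [div_le_iff₀ (by positivity)] at ht
      rw [← mul_div_assoc, div_le_div_iff₀ (by norm_num) (by positivity)]
      linarith
    linarith

lemma fiberSymbolMatrix_posDef {α₂ α₃ : ℝ} (h : |α₃| < α₂) (θ₀ : ℝ) :
    (fiberSymbolMatrix α₂ α₃ θ₀).PosDef := by
  refine Matrix.PosDef.of_dotProduct_mulVec_pos ?_ ?_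
  · ext i j
    fin_cases i <;> fin_cases j <;> simp [fiberSymbolMatrix]
  · intro v hv
    have hn : 0 < v 0 ^ 2 + v 1 ^ 2 := by
      by_contra! hle
      apply hv
      have h0 : v 0 = 0 := by nlinarith [sq_nonneg (v 0), sq_nonneg (v 1)]
      have h1 : v 1 = 0 := by nlinarith [sq_nonneg (v 0), sq_nonneg (v 1)]
      ext i
      fin_cases i <;> simp [h0, h1]
    set m := Real.cos (2*θ₀) * (v 0 ^ 2 - v 1 ^ 2) + Real.sin (2*θ₀) * (2 * v 0 * v 1) with hm
    -- Lagrange's identity, with `(a² - b²)² + (2ab)² = (a² + b²)²`.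
    have hmn : |m| ≤ v 0 ^ 2 + v 1 ^ 2 := by
      refine abs_le_of_sq_le_sq ?_ hn.le
      have hid : (v 0 ^ 2 + v 1 ^ 2)^2 - m^2
          = (Real.cos (2*θ₀) * (2 * v 0 * v 1) - Real.sin (2*θ₀) * (v 0 ^ 2 - v 1 ^ 2))^2 := by
        rw [hm]
        linear_combination (-(v 0 ^ 2 + v 1 ^ 2)^2) * Real.sin_sq_add_cos_sq (2*θ₀)
      nlinarith [sq_nonneg (Real.cos (2*θ₀) * (2 * v 0 * v 1)
        - Real.sin (2*θ₀) * (v 0 ^ 2 - v 1 ^ 2))]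
    have h1 : α₃ * m ≤ |α₃| * (v 0 ^ 2 + v 1 ^ 2) :=
      (le_abs_self _).trans (by rw [abs_mul]; gcongr)
    have h2 := mul_lt_mul_of_pos_right h hn
    have hform : star v ⬝ᵥ (fiberSymbolMatrix α₂ α₃ θ₀).mulVec v
        = α₂ * (v 0 ^ 2 + v 1 ^ 2) - α₃ * m := by
      simp [fiberSymbolMatrix, dotProduct, Matrix.mulVec, Fin.sum_univ_two, hm]
      ring
    rw [hform]
    linarith

theorem ellipticity_condition
    (d L r : ℝ) (hd : 0 < d) (hL : 0 < L) (hr : 0 < r)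
    (Z Z' c α₁ 𝒜 α₂ α₃ : ℝ)
    (hZ : Z = (1/π) * ∫ θ in (-(π/2))..(π/2), Real.exp (r * Real.cos (2*θ)))
    (hZ' : Z' = (1/π) * ∫ θ in (-(π/2))..(π/2),
        Real.cos (2*θ) * Real.exp (r * Real.cos (2*θ)))
    (hc : c = Z' / Z)
    (hα₁ : α₁ = 1 - 1/Z^2)
    (h𝒜 : 𝒜 = 1/(4*Z^2) - 1 + (3/2) * (c/r))
    (hα₂ : α₂ = d * (1 + L^2 * r * c/(6*α₁)))
    (hα₃ : α₃ = (d * L^2 * r)/(6*α₁) * 𝒜) :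
    (|α₃| < α₂ ↔ 6*α₁/(d*r*L^2) > -(𝒜 + c))
    ∧ (0 ≤ 𝒜 + c → |α₃| < α₂ ∧ ∀ θ₀ : ℝ, (fiberSymbolMatrix α₂ α₃ θ₀).PosDef) := by
  have hπ := Real.pi_pos
  have hJ0 : fiberMoment r 0 = π * Z := by
    rw [hZ, fiberMoment]
    simp
  have hJ1 : fiberMoment r 1 = π * Z' := by
    rw [hZ', fiberMoment]
    simp
  have hZ1 : 1 < Z := by
    have := pi_lt_fiberMoment hr
    rw [hJ0] at this
    exact lt_of_mul_lt_mul_left (by linarith) hπ.le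
  have hcJ : c = fiberMoment r 1 / fiberMoment r 0 := by
    rw [hc, hJ0, hJ1, mul_div_mul_left _ _ hπ.ne']
  have hA := abs_anisotropy_le hr hcJ hJ0 hZ1 h𝒜
  have hα₁pos : 0 < α₁ := by
    rw [hα₁, sub_pos, div_lt_one (by positivity)]
    nlinarith
  have hlt : |α₃| < α₂ := by
    have hP : 0 < d * L^2 * r / (6*α₁) := by positivity
    rw [hα₃, hα₂, abs_mul, abs_of_pos hP]
    have h1 := mul_le_mul_of_nonneg_left hA hP.le
    have h2 : d * (1 + L^2 * r * c/(6*α₁)) = d + d * L^2 * r / (6*α₁) * c := by ring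
    linarith
  have hrhs : 6*α₁/(d*r*L^2) > -(𝒜 + c) := by
    have : 0 < 6*α₁/(d*r*L^2) := by positivity
    linarith [(abs_le.mp hA).1]
  exact ⟨iff_of_true hlt hrhs, fun _ => ⟨hlt, fiberSymbolMatrix_posDef hlt⟩⟩
end
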